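/- arXiv:1810.03869 — 4 statements merged into one kernel-verified Lean document; each statement's English description precedes it below -/
import Mathlib

section
/- Let q1 ∈ ℝ⁵ be the endpoint at time T of an admissible trajectory of the Cartan control system starting from the origin with control (u1, u2) where u2 ≡ 1 and u1 is measurable with |u1| ≤ 1. Then there exists a piecewise constant control ū1 : [0,T] → [−1,1] with at most 4 points of discontinuity such that the trajectory of the Cartan system from the origin with control (ū1, 1) also has endpoint q1 at time T. -/
open MeasureTheory Set

/-- The Cartan control system ODE on `ℝ⁵` with coordinates `(x,y,z,v,w)`. -/
def CartanOde (x y z v w u1 u2 : ℝ → ℝ) (t : ℝ) : Prop :=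
  HasDerivAt x (u1 t) t ∧ HasDerivAt y (u2 t) t ∧
  HasDerivAt z ((x t * u2 t - y t * u1 t) / 2) t ∧
  HasDerivAt v (u2 t * (x t ^ 2 + y t ^ 2) / 2) t ∧
  HasDerivAt w (-(u1 t) * (x t ^ 2 + y t ^ 2) / 2) t

/-- A Lipschitz trajectory of the Cartan control system on `[0,T]` with a given control. -/
def IsTraj (T : ℝ) (x y z v w u1 u2 : ℝ → ℝ) : Prop :=
  (∃ K, LipschitzOnWith K (fun t => (x t, y t, z t, v t, w t)) (Icc 0 T)) ∧
  (∀ᵐ t ∂(volume.restrict (Icc 0 T)), CartanOde x y z v w u1 u2 t)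

/-- `u` is piecewise constant on `[0,T]` with at most 4 switching points:
there is a partition `0 = τ₀ ≤ τ₁ ≤ ⋯ ≤ τ₅ = T` and constants `c i` such that
`u = c i` on each interval `[τ i, τ (i+1))`. -/
def PiecewiseConst4 (T : ℝ) (u : ℝ → ℝ) : Prop :=
  ∃ τ : Fin 6 → ℝ, Monotone τ ∧ τ 0 = 0 ∧ τ 5 = T ∧
    ∃ c : Fin 5 → ℝ, ∀ i : Fin 5, ∀ t ∈ Ico (τ i.castSucc) (τ i.succ), u t = c i

/-!
Along a trajectory with `u2 = 1` one has `y t = t`, so the endpoint is a function of `T`, `x T` and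
the integrals over `[0, T]` of `x t` (area), `t * x t` (moment) and `x t ^ 2` (energy). We look for
a piecewise affine `f` that shares these numbers with a given `1`-Lipschitz curve `ξ`, `ξ 0 = 0`.

Some curve `y` made of four arcs of slopes `±1` has the same endpoint, area and moment as `ξ` and at
least as much energy. Indeed `ξ` is a limit of zigzags of slopes `±1`, and in a zigzag made of five
arcs the gap between two arcs of the same slope can be widened, keeping the area and the moment and
increasing the energy, until the first or the last arc disappears. After a reflection, `y` climbs
first, up to a time `p`.

A line clamped between a lower and an upper obstacle minimizes the energy among the curves between
these obstacles with the same area and moment. Take as obstacles the extreme `1`-Lipschitz curves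
from `0` to `ξ T` which climb at least until time `s`. For `s = p` the curve `y` is such a clamped
line, while for `s = 0` the curve `ξ` is a competitor, so the minimal energy is at most that of `ξ`.
The minimal energy depends continuously on `s`, hence equals the energy of `ξ` for some `s`, and a
clamped line between these obstacles has at most four affine pieces.
-/

/-! ### Moments of curves -/

/-- The five numbers recorded about a curve `f` up to time `t`: `t`, `f t`, `∫ f`, `∫ s * f s` and
`∫ f ^ 2`, the integrals being over `[0, t]`. -/
@[ext]
structure PathMoments where
  time : ℝ
  pos : ℝ
  area : ℝ
  moment : ℝ
  energy : ℝ

namespace PathMoments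

/-- The moments of the curve `f` on `[0, t]`. -/
noncomputable def ofCurve (f : ℝ → ℝ) (t : ℝ) : PathMoments where
  time := t
  pos := f t
  area := ∫ s in (0 : ℝ)..t, f s
  moment := ∫ s in (0 : ℝ)..t, s * f s
  energy := ∫ s in (0 : ℝ)..t, f s ^ 2

/-- The moments of the empty curve at the origin. -/
def origin : PathMoments := ⟨0, 0, 0, 0, 0⟩

/-- The effect on the moments of prolonging a curve by an affine arc of slope `σ = ±1` and
duration `l`; in the energy, `σ ^ 2` has been replaced by `1`. -/
noncomputable def arc (σ l : ℝ) (S : PathMoments) : PathMoments where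
  time := S.time + l
  pos := S.pos + σ * l
  area := S.area + S.pos * l + σ * l ^ 2 / 2
  moment := S.moment + S.time * S.pos * l + (S.pos + σ * S.time) * l ^ 2 / 2 + σ * l ^ 3 / 3
  energy := S.energy + S.pos ^ 2 * l + σ * S.pos * l ^ 2 + l ^ 3 / 3

/-- The moments of the reflected curve `-f`. -/
def neg (S : PathMoments) : PathMoments := ⟨S.time, -S.pos, -S.area, -S.moment, S.energy⟩

/-- `S` and `S'` agree except that `S'` may have more energy. -/
structure EnergyLE (S S' : PathMoments) : Prop where
  time_eq : S'.time = S.time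
  pos_eq : S'.pos = S.pos
  area_eq : S'.area = S.area
  moment_eq : S'.moment = S.moment
  energy_le : S.energy ≤ S'.energy

theorem EnergyLE.of_eq {S S' : PathMoments} (h : S = S') : EnergyLE S S' := by
  subst h
  exact ⟨rfl, rfl, rfl, rfl, le_rfl⟩

theorem EnergyLE.trans {S S' S'' : PathMoments} (h : EnergyLE S S') (h' : EnergyLE S' S'') :
    EnergyLE S S'' :=
  ⟨h'.time_eq.trans h.time_eq, h'.pos_eq.trans h.pos_eq, h'.area_eq.trans h.area_eq,
    h'.moment_eq.trans h.moment_eq, h.energy_le.trans h'.energy_le⟩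

theorem EnergyLE.neg {S S' : PathMoments} (h : EnergyLE S S') : EnergyLE S.neg S'.neg :=
  ⟨h.time_eq, congrArg Neg.neg h.pos_eq, congrArg Neg.neg h.area_eq,
    congrArg Neg.neg h.moment_eq, h.energy_le⟩

theorem EnergyLE.arc {S S' : PathMoments} (h : EnergyLE S S') (σ l : ℝ) :
    EnergyLE (S.arc σ l) (S'.arc σ l) := by
  obtain ⟨ht, hx, hA, hB, hQ⟩ := h
  constructor <;> simp only [PathMoments.arc, ht, hx, hA, hB]
  gcongr

@[simp]
theorem neg_neg (S : PathMoments) : S.neg.neg = S := by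
  simp [PathMoments.neg]

theorem neg_arc (σ l : ℝ) (S : PathMoments) : (S.arc σ l).neg = S.neg.arc (-σ) l := by
  ext <;> simp only [neg, arc] <;> ring

@[simp]
theorem neg_origin : origin.neg = origin := by
  simp [neg, origin]

theorem arc_zero (σ : ℝ) (S : PathMoments) : S.arc σ 0 = S := by
  ext <;> simp [arc]

theorem arc_arc {σ : ℝ} (hσ : σ ^ 2 = 1) (l m : ℝ) (S : PathMoments) :
    (S.arc σ l).arc σ m = S.arc σ (l + m) := by
  ext <;> simp only [arc]
  · ring
  · ring
  · ring
  · ring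
  · linear_combination (l ^ 2 * m + l * m ^ 2) * hσ

theorem ofCurve_zero {f : ℝ → ℝ} (h0 : f 0 = 0) : ofCurve f 0 = origin := by
  simp [ofCurve, origin, h0]

theorem ofCurve_neg (f : ℝ → ℝ) (t : ℝ) : ofCurve (-f) t = (ofCurve f t).neg := by
  simp [ofCurve, neg]

theorem integral_comp_arc {φ : ℝ → ℝ → ℝ} {f : ℝ → ℝ} {t l σ : ℝ} (hl : 0 ≤ l)
    (hf : Continuous f) (hφ : Continuous φ.uncurry)
    (harc : ∀ s ∈ Icc t (t + l), f s = f t + σ * (s - t)) :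
    ∫ s in (0 : ℝ)..(t + l), φ s (f s) =
      (∫ s in (0 : ℝ)..t, φ s (f s)) + ∫ r in (0 : ℝ)..l, φ (t + r) (f t + σ * r) := by
  have hint : Continuous fun s => φ s (f s) := hφ.comp (continuous_id.prodMk hf)
  rw [← intervalIntegral.integral_add_adjacent_intervals (hint.intervalIntegrable 0 t)
    (hint.intervalIntegrable t (t + l))]
  congr 1
  have hshift := intervalIntegral.integral_comp_add_left (a := 0) (b := l)
    (fun s => φ s (f s)) t
  rw [add_zero] at hshift
  rw [← hshift]
  refine intervalIntegral.integral_congr fun r hr => ?_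
  rw [uIcc_of_le hl] at hr
  simp only [harc (t + r) ⟨by linarith [hr.1], by linarith [hr.2]⟩, add_sub_cancel_left]

theorem integral_quadratic (a b c l : ℝ) :
    ∫ r in (0 : ℝ)..l, (a + b * r + c * r ^ 2) = a * l + b * l ^ 2 / 2 + c * l ^ 3 / 3 := by
  have hcont (g : ℝ → ℝ) (hg : Continuous g) : IntervalIntegrable g volume 0 l :=
    hg.intervalIntegrable _ _
  rw [intervalIntegral.integral_add (hcont _ (by fun_prop)) (hcont _ (by fun_prop)),
    intervalIntegral.integral_add (hcont _ (by fun_prop)) (hcont _ (by fun_prop))]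
  simp only [intervalIntegral.integral_const, intervalIntegral.integral_const_mul,
    intervalIntegral.integral_const_mul b fun r => r, integral_id, integral_pow, smul_eq_mul]
  ring

theorem ofCurve_add {f : ℝ → ℝ} (hf : Continuous f) {σ t l : ℝ} (hσ : σ ^ 2 = 1) (hl : 0 ≤ l)
    (harc : ∀ s ∈ Icc t (t + l), f s = f t + σ * (s - t)) :
    ofCurve f (t + l) = (ofCurve f t).arc σ l := by
  have hquad (φ : ℝ → ℝ → ℝ) (hφ : Continuous φ.uncurry) (a b c : ℝ)
      (habc : ∀ r, φ (t + r) (f t + σ * r) = a + b * r + c * r ^ 2) :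
      ∫ s in (0 : ℝ)..(t + l), φ s (f s) =
        (∫ s in (0 : ℝ)..t, φ s (f s)) + (a * l + b * l ^ 2 / 2 + c * l ^ 3 / 3) := by
    rw [integral_comp_arc hl hf hφ harc, ← integral_quadratic]
    simp only [habc]
  ext
  · rfl
  · simp only [ofCurve, arc, harc (t + l) ⟨by linarith, le_rfl⟩, add_sub_cancel_left]
  · have h := hquad (fun _ x => x) (by fun_prop) (f t) σ 0 fun r => by ring
    simp only [ofCurve, arc, h]
    ring
  · have h := hquad (fun s x => s * x) (by fun_prop) (t * f t) (f t + σ * t) σ fun r => by ring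
    simp only [ofCurve, arc, h]
    ring
  · have h := hquad (fun _ x => x ^ 2) (by fun_prop) (f t ^ 2) (2 * σ * f t) 1 fun r => by
      linear_combination r ^ 2 * hσ
    simp only [ofCurve, arc, h]
    ring

end PathMoments

/-! ### Reduction to four arcs of slopes `±1` -/

theorem exists_continuousOn_add_eq_mul_eq {α : Type*} [TopologicalSpace α] {s : Set α}
    {κ : α → ℝ} {x₀ : α} {m n : ℝ} (hκ : ContinuousOn κ s) (hκ0 : ∀ x ∈ s, 0 ≤ κ x)
    (hκ1 : ∀ x ∈ s, 4 * κ x ≤ (m + n) ^ 2) (hx₀ : κ x₀ = m * n) (hmn : 0 ≤ m + n) :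
    ∃ f g : α → ℝ, ContinuousOn f s ∧ ContinuousOn g s ∧ f x₀ = m ∧ g x₀ = n ∧
      ∀ x ∈ s, 0 ≤ f x ∧ 0 ≤ g x ∧ f x + g x = m + n ∧ f x * g x = κ x := by
  wlog hle : n ≤ m generalizing m n with hwlog
  · obtain ⟨f, g, hf, hg, hf₀, hg₀, hfg⟩ := hwlog (m := n) (n := m)
      (by simpa only [add_comm] using hκ1) (by rw [hx₀, mul_comm]) (by linarith) (by linarith)
    refine ⟨g, f, hg, hf, hg₀, hf₀, fun x hx => ?_⟩
    obtain ⟨h₁, h₂, h₃, h₄⟩ := hfg x hx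
    exact ⟨h₂, h₁, by linarith, by rw [mul_comm, h₄]⟩
  have hsqrt₀ : √((m + n) ^ 2 - 4 * κ x₀) = m - n := by
    rw [hx₀, show (m + n) ^ 2 - 4 * (m * n) = (m - n) ^ 2 by ring,
      Real.sqrt_sq (sub_nonneg.2 hle)]
  refine ⟨fun x => (m + n + √((m + n) ^ 2 - 4 * κ x)) / 2,
    fun x => (m + n - √((m + n) ^ 2 - 4 * κ x)) / 2, by fun_prop, by fun_prop,
    by simp only [hsqrt₀]; ring, by simp only [hsqrt₀]; ring,
    fun x hx => ⟨by positivity, ?_, ?_, ?_⟩⟩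
  · have : √((m + n) ^ 2 - 4 * κ x) ≤ m + n :=
      Real.sqrt_le_iff.2 ⟨hmn, by linarith [hκ0 x hx]⟩
    linarith
  · ring
  · linear_combination -(1 / 4) * Real.mul_self_sqrt (sub_nonneg.2 (hκ1 x hx))

namespace PathMoments

/-- The moments of a curve made of five arcs of slopes `1, -1, 1, -1, 1` and of the given
durations. -/
noncomputable def fiveArc (p l₁ e l₂ r : ℝ) : PathMoments :=
  ((((origin.arc 1 p).arc (-1) l₁).arc 1 e).arc (-1) l₂).arc 1 r

-- The two descending arcs occupy sets of times with the same measure and the same first and second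
-- moments; the energies then differ by `4 (l₁ l₂ e - m₁ m₂ e')`.
theorem energyLE_fiveArc_of_wider_gap {p l₁ e l₂ r p' m₁ e' m₂ r' : ℝ}
    (hl₁ : 0 ≤ l₁) (hl₂ : 0 ≤ l₂) (hL : 0 < l₁ + l₂) (he : 0 ≤ e) (hee : e ≤ e')
    (hlen : m₁ + m₂ = l₁ + l₂) (htime : p' + m₁ + e' + m₂ + r' = p + l₁ + e + l₂ + r)
    (hfirst : m₁ * (p' + m₁ / 2) + m₂ * (p' + m₁ + e' + m₂ / 2) =
      l₁ * (p + l₁ / 2) + l₂ * (p + l₁ + e + l₂ / 2))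
    (hgap : m₁ * m₂ * (e' * (e' + (l₁ + l₂))) = l₁ * l₂ * (e * (e + (l₁ + l₂)))) :
    EnergyLE (fiveArc p l₁ e l₂ r) (fiveArc p' m₁ e' m₂ r') := by
  have hprod : m₁ * m₂ * e' ≤ l₁ * l₂ * e := by
    refine le_of_mul_le_mul_right (a := e' + (l₁ + l₂)) ?_ (by linarith)
    calc m₁ * m₂ * e' * (e' + (l₁ + l₂)) = l₁ * l₂ * e * (e + (l₁ + l₂)) := by
          linear_combination hgap
      _ ≤ l₁ * l₂ * e * (e' + (l₁ + l₂)) := by gcongr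
  obtain rfl : m₂ = l₁ + l₂ - m₁ := by linarith
  obtain rfl : r' = p + l₁ + e + l₂ + r - p' - m₁ - e' - (l₁ + l₂ - m₁) := by linarith
  have hsecond : (p' + m₁) ^ 3 - p' ^ 3 + (p' + e' + (l₁ + l₂)) ^ 3 - (p' + m₁ + e') ^ 3 =
      (p + l₁) ^ 3 - p ^ 3 + (p + l₁ + e + l₂) ^ 3 - (p + l₁ + e) ^ 3 := by
    refine mul_left_cancel₀ hL.ne' ?_
    linear_combination 3 * (m₁ * (p' + m₁ / 2) +
      (l₁ + l₂ - m₁) * (p' + m₁ + e' + (l₁ + l₂ - m₁) / 2) +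
      l₁ * (p + l₁ / 2) + l₂ * (p + l₁ + e + l₂ / 2)) * hfirst + 3 * hgap
  constructor <;> simp only [fiveArc, arc, origin]
  · ring
  · ring
  · linear_combination 2 * hfirst
  · linear_combination hsecond / 3
  · refine sub_nonneg.1 (le_of_le_of_eq
      (b := 4 * (l₁ * l₂ * e - m₁ * (l₁ + l₂ - m₁) * e')) (by linarith) ?_)
    linear_combination -(2 / 3) * hsecond + 4 * (l₁ + l₂) * hfirst

theorem exists_wider_gap {p l₁ e l₂ r : ℝ} (hp : 0 ≤ p) (hl₁ : 0 < l₁) (he : 0 < e)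
    (hl₂ : 0 < l₂) (hr : 0 ≤ r) :
    ∃ p' m₁ e' m₂ r', 0 ≤ p' ∧ 0 ≤ m₁ ∧ 0 ≤ e' ∧ 0 ≤ m₂ ∧ 0 ≤ r' ∧ p' * r' = 0 ∧
      EnergyLE (fiveArc p l₁ e l₂ r) (fiveArc p' m₁ e' m₂ r') := by
  let W := p + l₁ + e + l₂ + r
  have hpos : ∀ E ∈ Icc e W, 0 < E * (E + (l₁ + l₂)) := fun E hE => by
    have : 0 < E := he.trans_le hE.1
    positivity
  -- When the gap has grown to `E`, the product of the two descending durations has to be `κ E`.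
  let κ : ℝ → ℝ := fun E => l₁ * l₂ * (e * (e + (l₁ + l₂))) / (E * (E + (l₁ + l₂)))
  have hκ : ContinuousOn κ (Icc e W) :=
    ContinuousOn.div₀ (by fun_prop) (by fun_prop) fun E hE => (hpos E hE).ne'
  have hκ_le : ∀ E ∈ Icc e W, κ E ≤ l₁ * l₂ := fun E hE => by
    have hE1 := hE.1
    have hE0 : 0 ≤ E := he.le.trans hE1
    exact (div_le_iff₀ (hpos E hE)).2 (by gcongr)
  obtain ⟨m₁, m₂, hm₁, hm₂, hm₁e, hm₂e, hm⟩ :=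
    exists_continuousOn_add_eq_mul_eq (x₀ := e) (m := l₁) (n := l₂) hκ
      (fun E hE => div_nonneg (by positivity) (hpos E hE).le)
      (fun E hE => by linarith [hκ_le E hE, sq_nonneg (l₁ - l₂)])
      (mul_div_cancel_right₀ _ (by positivity)) (by positivity)
  let p' : ℝ → ℝ := fun E => (l₁ * (p + l₁ / 2) + l₂ * (p + l₁ + e + l₂ / 2)
    - m₁ E * (m₁ E / 2) - m₂ E * (m₁ E + E + m₂ E / 2)) / (l₁ + l₂)
  let r' : ℝ → ℝ := fun E => W - p' E - (l₁ + l₂) - E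
  have hp'e : p' e = p := by simp only [p', hm₁e, hm₂e]; field_simp; ring
  have hr'e : r' e = r := by simp only [r', hp'e, W]; ring
  have hmin : ContinuousOn (fun E => min (p' E) (r' E)) (Icc e W) :=
    ContinuousOn.inf (by fun_prop) (by fun_prop)
  obtain ⟨E, hE, hE0⟩ : ∃ E ∈ Icc e W, min (p' E) (r' E) = 0 := by
    refine intermediate_value_Icc' (by simp only [W]; linarith) hmin ⟨?_, ?_⟩
    · by_contra! hcon
      linarith [(lt_min_iff.1 hcon).1, (lt_min_iff.1 hcon).2]
    · simpa only [hp'e, hr'e] using le_min hp hr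
  obtain ⟨hm₁0, hm₂0, hsum, hprod⟩ := hm E hE
  refine ⟨p' E, m₁ E, E, m₂ E, r' E, hE0 ▸ min_le_left _ _, hm₁0, he.le.trans hE.1, hm₂0,
    hE0 ▸ min_le_right _ _, ?_, energyLE_fiveArc_of_wider_gap hl₁.le hl₂.le (by positivity) he.le
      hE.1 hsum ?_ ?_ ?_⟩
  · rcases min_choice (p' E) (r' E) with h | h <;> rw [h] at hE0 <;> simp [hE0]
  · simp only [r', W]; linarith
  · have hp'E : p' E * (l₁ + l₂) = _ := div_mul_cancel₀ _ (by positivity)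
    linear_combination hp'E + p' E * hsum
  · rw [hprod]
    exact div_mul_cancel₀ _ (hpos E hE).ne'

theorem neg_fiveArc_zero_left (l₁ e l₂ r : ℝ) :
    (fiveArc 0 l₁ e l₂ r).neg = fiveArc l₁ e l₂ r 0 := by
  simp [fiveArc, neg_arc, arc_zero]

theorem neg_fiveArc_zero_right (p l₁ e l₂ : ℝ) :
    (fiveArc p l₁ e l₂ 0).neg = fiveArc 0 p l₁ e l₂ := by
  simp [fiveArc, neg_arc, arc_zero]

/-- The moments `S` have no more energy than those of some curve made of four arcs of slopes
`±1`, up and down alternately: the first or the last of five arcs has length `0`. -/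
def IsFourArcBounded (S : PathMoments) : Prop :=
  ∃ p l₁ e l₂ r : ℝ, 0 ≤ p ∧ 0 ≤ l₁ ∧ 0 ≤ e ∧ 0 ≤ l₂ ∧ 0 ≤ r ∧ p * r = 0 ∧
    EnergyLE S (fiveArc p l₁ e l₂ r)

theorem isFourArcBounded_origin : origin.IsFourArcBounded :=
  ⟨0, 0, 0, 0, 0, le_rfl, le_rfl, le_rfl, le_rfl, le_rfl, mul_zero 0,
    .of_eq (by simp only [fiveArc, arc_zero])⟩

theorem IsFourArcBounded.of_energyLE {S S' : PathMoments} (h : EnergyLE S S')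
    (h' : S'.IsFourArcBounded) : S.IsFourArcBounded := by
  obtain ⟨p, l₁, e, l₂, r, hp, hl₁, he, hl₂, hr, hpr, hS'⟩ := h'
  exact ⟨p, l₁, e, l₂, r, hp, hl₁, he, hl₂, hr, hpr, h.trans hS'⟩

theorem IsFourArcBounded.neg {S : PathMoments} (h : S.IsFourArcBounded) :
    S.neg.IsFourArcBounded := by
  obtain ⟨p, l₁, e, l₂, r, hp, hl₁, he, hl₂, hr, hpr, hS⟩ := h
  rcases mul_eq_zero.1 hpr with rfl | rfl
  · exact ⟨l₁, e, l₂, r, 0, hl₁, he, hl₂, hr, le_rfl, mul_zero _,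
      neg_fiveArc_zero_left l₁ e l₂ r ▸ hS.neg⟩
  · exact ⟨0, p, l₁, e, l₂, le_rfl, hp, hl₁, he, hl₂, zero_mul _,
      neg_fiveArc_zero_right p l₁ e l₂ ▸ hS.neg⟩

theorem isFourArcBounded_fiveArc {p l₁ e l₂ r : ℝ} (hp : 0 ≤ p) (hl₁ : 0 ≤ l₁) (he : 0 ≤ e)
    (hl₂ : 0 ≤ l₂) (hr : 0 ≤ r) : (fiveArc p l₁ e l₂ r).IsFourArcBounded := by
  rcases hl₁.eq_or_lt with rfl | hl₁'
  · refine ⟨p + e, l₂, r, 0, 0, by positivity, hl₂, hr, le_rfl, le_rfl, mul_zero _, .of_eq ?_⟩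
    simp only [fiveArc, arc_zero, arc_arc (one_pow 2), add_zero]
  rcases hl₂.eq_or_lt with rfl | hl₂'
  · refine ⟨p, l₁, e + r, 0, 0, hp, hl₁, by positivity, le_rfl, le_rfl, mul_zero _, .of_eq ?_⟩
    simp only [fiveArc, arc_zero, arc_arc (one_pow 2), add_zero]
  rcases he.eq_or_lt with rfl | he'
  · refine ⟨p, l₁ + l₂, r, 0, 0, hp, by positivity, hr, le_rfl, le_rfl, mul_zero _, .of_eq ?_⟩
    simp only [fiveArc, arc_zero, arc_arc (neg_one_sq (R := ℝ))]
  exact exists_wider_gap hp hl₁' he' hl₂' hr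

theorem IsFourArcBounded.arc_one {S : PathMoments} (h : S.IsFourArcBounded) {l : ℝ}
    (hl : 0 ≤ l) : (S.arc 1 l).IsFourArcBounded := by
  obtain ⟨p, l₁, e, l₂, r, hp, hl₁, he, hl₂, hr, -, hS⟩ := h
  refine .of_energyLE (hS.arc 1 l) ?_
  rw [fiveArc, arc_arc (one_pow 2)]
  exact isFourArcBounded_fiveArc hp hl₁ he hl₂ (by positivity)

theorem IsFourArcBounded.arc_neg_one {S : PathMoments} (h : S.IsFourArcBounded) {l : ℝ}
    (hl : 0 ≤ l) : (S.arc (-1) l).IsFourArcBounded := by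
  simpa [neg_arc] using (h.neg.arc_one hl).neg

end PathMoments

theorem le_add_abs_sub_of_lipschitz {ξ : ℝ → ℝ} (hξ : LipschitzWith 1 ξ) (s t : ℝ) :
    ξ s ≤ ξ t + |s - t| := by
  simpa [Real.dist_eq] using hξ.le_add_mul s t

theorem lipschitzWith_one_of_le_add {f : ℝ → ℝ} (h : ∀ s t, f s ≤ f t + |s - t|) :
    LipschitzWith 1 f :=
  .of_le_add fun s t => by simpa [Real.dist_eq] using h s t

/-- For a `1`-Lipschitz `ξ`, the largest `1`-Lipschitz function which agrees with `ξ` at the points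
`p j` (McShane's extension): a zigzag with slopes `±1` between consecutive nodes. -/
noncomputable def zigzag (p : ℕ → ℝ) (ξ : ℝ → ℝ) (t : ℝ) : ℝ := ⨅ j, (ξ (p j) + |t - p j|)

namespace zigzag

variable {p : ℕ → ℝ} {ξ : ℝ → ℝ}

theorem le_cone (hξ : LipschitzWith 1 ξ) (t : ℝ) (j : ℕ) :
    zigzag p ξ t ≤ ξ (p j) + |t - p j| :=
  ciInf_le ⟨ξ t, forall_mem_range.2 fun _ => le_add_abs_sub_of_lipschitz hξ _ _⟩ j

theorem self_le (hξ : LipschitzWith 1 ξ) (t : ℝ) : ξ t ≤ zigzag p ξ t :=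
  le_ciInf fun _ => le_add_abs_sub_of_lipschitz hξ _ _

theorem apply_node (hξ : LipschitzWith 1 ξ) (j : ℕ) : zigzag p ξ (p j) = ξ (p j) :=
  le_antisymm (by simpa using le_cone (p := p) hξ (p j) j) (self_le hξ (p j))

theorem lipschitzWith (hξ : LipschitzWith 1 ξ) : LipschitzWith 1 (zigzag p ξ) := by
  refine lipschitzWith_one_of_le_add fun s t => ?_
  rw [← sub_le_iff_le_add]
  refine le_ciInf fun j => ?_
  linarith [le_cone (p := p) hξ s j, abs_sub_le s t (p j)]

theorem abs_sub_le (hξ : LipschitzWith 1 ξ) (t : ℝ) (j : ℕ) :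
    |zigzag p ξ t - ξ t| ≤ 2 * |t - p j| := by
  rw [abs_of_nonneg (sub_nonneg.2 (self_le hξ t))]
  linarith [le_cone (p := p) hξ t j, le_add_abs_sub_of_lipschitz hξ (p j) t, abs_sub_comm t (p j)]

theorem eq_min (hξ : LipschitzWith 1 ξ) (hp : Monotone p) {k : ℕ} {t : ℝ}
    (ht : t ∈ Icc (p k) (p (k + 1))) :
    zigzag p ξ t = min (ξ (p k) + (t - p k)) (ξ (p (k + 1)) + (p (k + 1) - t)) := by
  have hleft : |t - p k| = t - p k := abs_of_nonneg (sub_nonneg.2 ht.1)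
  have hright : |t - p (k + 1)| = p (k + 1) - t := by
    rw [abs_sub_comm, abs_of_nonneg (sub_nonneg.2 ht.2)]
  refine le_antisymm (le_min (hleft ▸ le_cone hξ t k) (hright ▸ le_cone hξ t (k + 1)))
    (le_ciInf fun j => ?_)
  rcases le_or_gt j k with hj | hj
  · have hpj := hp hj
    refine (min_le_left _ _).trans ?_
    have hlip := le_add_abs_sub_of_lipschitz hξ (p k) (p j)
    rw [abs_of_nonneg (by linarith)] at hlip
    rw [abs_of_nonneg (by linarith [ht.1])]
    linarith
  · have hpj := hp (Nat.succ_le_of_lt hj)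
    refine (min_le_right _ _).trans ?_
    have hlip := le_add_abs_sub_of_lipschitz hξ (p (k + 1)) (p j)
    rw [abs_sub_comm, abs_of_nonneg (by linarith)] at hlip
    rw [abs_sub_comm, abs_of_nonneg (by linarith [ht.2])]
    linarith

theorem ofCurve_succ (hξ : LipschitzWith 1 ξ) (hp : Monotone p) (k : ℕ) :
    ∃ l m : ℝ, 0 ≤ l ∧ 0 ≤ m ∧ PathMoments.ofCurve (zigzag p ξ) (p (k + 1)) =
      ((PathMoments.ofCurve (zigzag p ξ) (p k)).arc 1 l).arc (-1) m := by
  have hcont : Continuous (zigzag p ξ) := (lipschitzWith hξ).continuous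
  have hstep := hp k.le_succ
  have hrise := le_add_abs_sub_of_lipschitz hξ (p (k + 1)) (p k)
  have hfall := le_add_abs_sub_of_lipschitz hξ (p k) (p (k + 1))
  rw [abs_of_nonneg (by linarith)] at hrise
  rw [abs_sub_comm, abs_of_nonneg (by linarith)] at hfall
  obtain ⟨l, hl⟩ : ∃ l, l = (p (k + 1) - p k + (ξ (p (k + 1)) - ξ (p k))) / 2 := ⟨_, rfl⟩
  obtain ⟨m, hm⟩ : ∃ m, m = (p (k + 1) - p k - (ξ (p (k + 1)) - ξ (p k))) / 2 := ⟨_, rfl⟩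
  have hl0 : 0 ≤ l := by linarith
  have hm0 : 0 ≤ m := by linarith
  have hend : p (k + 1) = p k + l + m := by linarith
  have hup : ∀ s ∈ Icc (p k) (p k + l), zigzag p ξ s = ξ (p k) + (s - p k) := fun s hs => by
    rw [eq_min hξ hp ⟨hs.1, by linarith [hs.2]⟩, min_eq_left (by linarith [hs.2])]
  have hdown : ∀ s ∈ Icc (p k + l) (p k + l + m),
      zigzag p ξ s = ξ (p k) + l - (s - (p k + l)) := fun s hs => by
    rw [eq_min hξ hp (k := k) ⟨by linarith [hs.1], by linarith [hs.2]⟩,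
      min_eq_right (by linarith [hs.1])]
    linarith
  have hpeak := hdown (p k + l) ⟨le_rfl, by linarith⟩
  refine ⟨l, m, hl0, hm0, ?_⟩
  rw [hend, PathMoments.ofCurve_add hcont neg_one_sq hm0, PathMoments.ofCurve_add hcont
    (one_pow 2) hl0]
  · intro s hs
    rw [hup s hs, apply_node hξ, one_mul]
  · intro s hs
    rw [hdown s hs, hpeak]
    ring

theorem isFourArcBounded_ofCurve (hξ : LipschitzWith 1 ξ) (hp : Monotone p) (hp0 : p 0 = 0)
    (hξ0 : ξ 0 = 0) (k : ℕ) : (PathMoments.ofCurve (zigzag p ξ) (p k)).IsFourArcBounded := by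
  induction k with
  | zero =>
    rw [hp0, PathMoments.ofCurve_zero (by rw [← hp0, apply_node hξ, hp0, hξ0])]
    exact PathMoments.isFourArcBounded_origin
  | succ k ih =>
    obtain ⟨l, m, hl, hm, heq⟩ := ofCurve_succ hξ hp k
    rw [heq]
    exact (ih.arc_one hl).arc_neg_one hm

end zigzag

theorem tendsto_integral_comp {φ : ℝ → ℝ → ℝ} (hφ : Continuous φ.uncurry) {f : ℕ → ℝ → ℝ}
    {ξ : ℝ → ℝ} {a b C : ℝ} (hf : ∀ n, Continuous (f n)) (hC : ∀ n, ∀ t ∈ uIcc a b, |f n t| ≤ C)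
    (hlim : ∀ t ∈ uIcc a b, Filter.Tendsto (fun n => f n t) Filter.atTop (nhds (ξ t))) :
    Filter.Tendsto (fun n => ∫ s in a..b, φ s (f n s)) Filter.atTop
      (nhds (∫ s in a..b, φ s (ξ s))) := by
  obtain ⟨B, hB⟩ := (isCompact_uIcc.prod isCompact_Icc).exists_bound_of_continuousOn
    (s := uIcc a b ×ˢ Icc (-C) C) hφ.continuousOn
  refine intervalIntegral.tendsto_integral_filter_of_dominated_convergence (fun _ => B)
    (.of_forall fun n => ?_) (.of_forall fun n => .of_forall fun t ht => ?_) (by simp)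
    (.of_forall fun t ht => ?_)
  · exact (hφ.comp (continuous_id.prodMk (hf n))).aestronglyMeasurable
  · exact hB (t, f n t) ⟨uIoc_subset_uIcc ht, abs_le.1 (hC n t (uIoc_subset_uIcc ht))⟩
  · exact (hφ.comp (.prodMk_right t)).continuousAt.tendsto.comp (hlim t (uIoc_subset_uIcc ht))

namespace PathMoments

theorem continuous_fiveArc : ∀ c ∈ [time, pos, area, moment, energy],
    Continuous fun d : ℝ × ℝ × ℝ × ℝ × ℝ =>
      c (fiveArc d.1 d.2.1 d.2.2.1 d.2.2.2.1 d.2.2.2.2) := by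
  simp only [List.forall_mem_cons, List.not_mem_nil, false_imp_iff, implies_true, and_true,
    fiveArc, arc, origin]
  exact ⟨by fun_prop, by fun_prop, by fun_prop, by fun_prop, by fun_prop⟩

theorem fiveArc_time (p l₁ e l₂ r : ℝ) : (fiveArc p l₁ e l₂ r).time = p + l₁ + e + l₂ + r := by
  simp only [fiveArc, arc, origin, zero_add]

theorem isFourArcBounded_of_tendsto {S : ℕ → PathMoments} {S' : PathMoments}
    (hS : ∀ n, (S n).IsFourArcBounded)
    (hlim : ∀ c ∈ [time, pos, area, moment, energy],
      Filter.Tendsto (fun n => c (S n)) Filter.atTop (nhds (c S'))) :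
    S'.IsFourArcBounded := by
  choose p l₁ e l₂ r hp hl₁ he hl₂ hr hpr hle using hS
  obtain ⟨M, hM⟩ := (hlim time (by simp)).bddAbove_range
  have hmem : ∀ n, (p n, l₁ n, e n, l₂ n, r n) ∈
      Icc 0 M ×ˢ Icc 0 M ×ˢ Icc 0 M ×ˢ Icc 0 M ×ˢ Icc 0 M := fun n => by
    have hMn := hM (mem_range_self n)
    rw [← (hle n).time_eq, fiveArc_time] at hMn
    have hpn := hp n; have hl₁n := hl₁ n; have hen := he n; have hl₂n := hl₂ n; have hrn := hr n
    refine ⟨⟨hpn, ?_⟩, ⟨hl₁n, ?_⟩, ⟨hen, ?_⟩, ⟨hl₂n, ?_⟩, ⟨hrn, ?_⟩⟩ <;> dsimp only <;> linarith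
  obtain ⟨⟨p', l₁', e', l₂', r'⟩, ⟨hp', hl₁', he', hl₂', hr'⟩, φ, hφ, hd⟩ :=
    (isCompact_Icc.prod (isCompact_Icc.prod (isCompact_Icc.prod
      (isCompact_Icc.prod isCompact_Icc)))).tendsto_subseq hmem
  have hG (c : PathMoments → ℝ) (hc : c ∈ [time, pos, area, moment, energy]) :=
    ((continuous_fiveArc c hc).tendsto _).comp hd
  have hlimφ (c : PathMoments → ℝ) (hc : c ∈ [time, pos, area, moment, energy]) :=
    (hlim c hc).comp hφ.tendsto_atTop
  refine ⟨p', l₁', e', l₂', r', hp'.1, hl₁'.1, he'.1, hl₂'.1, hr'.1, ?_, ?_, ?_, ?_, ?_, ?_⟩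
  · have hprod : Continuous fun d : ℝ × ℝ × ℝ × ℝ × ℝ => d.1 * d.2.2.2.2 := by fun_prop
    exact tendsto_nhds_unique ((hprod.tendsto _).comp hd)
      (tendsto_const_nhds.congr fun n => (hpr (φ n)).symm)
  · exact tendsto_nhds_unique (hG time (by simp))
      ((hlimφ time (by simp)).congr fun n => (hle (φ n)).time_eq.symm)
  · exact tendsto_nhds_unique (hG pos (by simp))
      ((hlimφ pos (by simp)).congr fun n => (hle (φ n)).pos_eq.symm)
  · exact tendsto_nhds_unique (hG area (by simp))
      ((hlimφ area (by simp)).congr fun n => (hle (φ n)).area_eq.symm)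
  · exact tendsto_nhds_unique (hG moment (by simp))
      ((hlimφ moment (by simp)).congr fun n => (hle (φ n)).moment_eq.symm)
  · exact le_of_tendsto_of_tendsto' (hlimφ energy (by simp)) (hG energy (by simp))
      fun n => (hle (φ n)).energy_le

end PathMoments

theorem tendsto_zigzag {ξ : ℝ → ℝ} (hξ : LipschitzWith 1 ξ) {T t : ℝ} (hT : 0 < T)
    (ht : 0 ≤ t) :
    Filter.Tendsto (fun n : ℕ => zigzag (fun j => j * (T / (n + 1))) ξ t) Filter.atTop
      (nhds (ξ t)) := by
  have hbound : ∀ n : ℕ, |zigzag (fun j => j * (T / (n + 1))) ξ t - ξ t| ≤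
      2 * T * (1 / ((n : ℝ) + 1)) := fun n => by
    have hh : 0 < T / ((n : ℝ) + 1) := by positivity
    have hfloor := Nat.floor_le (div_nonneg ht hh.le)
    have hlt := Nat.lt_floor_add_one (t / (T / (n + 1)))
    rw [le_div_iff₀ hh] at hfloor
    rw [div_lt_iff₀ hh] at hlt
    refine (zigzag.abs_sub_le hξ t ⌊t / (T / (n + 1))⌋₊).trans ?_
    rw [abs_of_nonneg (sub_nonneg.2 hfloor)]
    calc _ ≤ 2 * (T / ((n : ℝ) + 1)) := by linarith
      _ = _ := by ring
  refine tendsto_iff_norm_sub_tendsto_zero.2 (squeeze_zero (fun _ => norm_nonneg _) hbound ?_)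
  simpa using tendsto_one_div_add_atTop_nhds_zero_nat.const_mul (2 * T)

theorem isFourArcBounded_ofCurve {ξ : ℝ → ℝ} (hξ : LipschitzWith 1 ξ) (hξ0 : ξ 0 = 0) {T : ℝ}
    (hT : 0 ≤ T) : (PathMoments.ofCurve ξ T).IsFourArcBounded := by
  rcases hT.eq_or_lt with rfl | hT'
  · rw [PathMoments.ofCurve_zero hξ0]
    exact PathMoments.isFourArcBounded_origin
  let f : ℕ → ℝ → ℝ := fun n => zigzag (fun j => j * (T / (n + 1))) ξ
  have hend (n : ℕ) : ((n + 1 : ℕ) : ℝ) * (T / (n + 1)) = T := by push_cast; field_simp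
  have hf0 (n : ℕ) : f n 0 = 0 := by
    simpa [hξ0] using zigzag.apply_node (p := fun j => j * (T / (n + 1))) hξ 0
  have hfT (n : ℕ) : f n T = ξ T := by
    simpa only [hend] using zigzag.apply_node (p := fun j => j * (T / (n + 1))) hξ (n + 1)
  have hS (n : ℕ) : (PathMoments.ofCurve (f n) T).IsFourArcBounded := by
    simpa only [hend] using zigzag.isFourArcBounded_ofCurve (p := fun j => j * (T / (n + 1))) hξ
      (fun i j hij => by dsimp only; gcongr) (by simp) hξ0 (n + 1)
  have hbound (n : ℕ) : ∀ t ∈ uIcc 0 T, |f n t| ≤ T := fun t ht => by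
    rw [uIcc_of_le hT] at ht
    have := (zigzag.lipschitzWith (p := fun j => j * (T / (n + 1))) hξ).dist_le_mul t 0
    rw [Real.dist_eq, Real.dist_eq, sub_zero, abs_of_nonneg ht.1] at this
    simpa [f, hf0] using this.trans (by simpa using ht.2)
  have hint {φ : ℝ → ℝ → ℝ} (hφ : Continuous φ.uncurry) :=
    tendsto_integral_comp hφ (fun n => (zigzag.lipschitzWith hξ).continuous) hbound
      fun t ht => tendsto_zigzag hξ hT' (uIcc_of_le hT ▸ ht).1
  refine PathMoments.isFourArcBounded_of_tendsto hS ?_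
  simp only [List.forall_mem_cons, List.not_mem_nil, false_imp_iff, implies_true, and_true]
  refine ⟨tendsto_const_nhds, ?_, hint (φ := fun _ x => x) (by fun_prop),
    hint (φ := fun s x => s * x) (by fun_prop), hint (φ := fun _ x => x ^ 2) (by fun_prop)⟩
  simp only [PathMoments.ofCurve, hfT, tendsto_const_nhds]

/-! ### Lines clamped between obstacles -/

theorem isPreconnected_image_of_eq_on_fibers {X Y Z : Type*} [TopologicalSpace X]
    [TopologicalSpace Y] [T2Space Y] [TopologicalSpace Z] {K : Set X} (hK : IsCompact K)
    {π : X → Y} (hπ : Continuous π) {F : X → Z} (hF : Continuous F)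
    (hconn : IsPreconnected (π '' K)) (hfib : ∀ x ∈ K, ∀ y ∈ K, π x = π y → F x = F y) :
    IsPreconnected (F '' K) := by
  rw [isPreconnected_closed_iff] at hconn ⊢
  rintro u v hu hv huv ⟨_, ⟨x, hxK, rfl⟩, hxu⟩ ⟨_, ⟨y, hyK, rfl⟩, hyv⟩
  have hclosed : ∀ w, IsClosed w → IsClosed (π '' (K ∩ F ⁻¹' w)) := fun w hw =>
    ((hK.inter_right (hw.preimage hF)).image hπ).isClosed
  have hcover : π '' K ⊆ π '' (K ∩ F ⁻¹' u) ∪ π '' (K ∩ F ⁻¹' v) := by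
    rintro _ ⟨z, hzK, rfl⟩
    exact (huv ⟨z, hzK, rfl⟩).imp (fun h => ⟨z, ⟨hzK, h⟩, rfl⟩) fun h => ⟨z, ⟨hzK, h⟩, rfl⟩
  obtain ⟨-, -, ⟨z, ⟨hzK, hzu⟩, rfl⟩, ⟨z', ⟨hz'K, hz'v⟩, hz⟩⟩ :=
    hconn _ _ (hclosed u hu) (hclosed v hv) hcover ⟨π x, ⟨x, hxK, rfl⟩, x, ⟨hxK, hxu⟩, rfl⟩
      ⟨π y, ⟨y, hyK, rfl⟩, y, ⟨hyK, hyv⟩, rfl⟩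
  refine ⟨F z, ⟨z, hzK, rfl⟩, hzu, ?_⟩
  rw [hfib z hzK z' hz'K hz.symm]
  exact hz'v

theorem exists_sign_change {h : ℝ → ℝ} {a b : ℝ} (hab : a ≤ b)
    (hh : ∀ s ∈ Icc a b, ∀ t ∈ Icc a b, s ≤ t → 0 < h t → 0 ≤ h s) :
    ∃ c ∈ Icc a b, ∀ t ∈ Icc a b, (t < c → 0 ≤ h t) ∧ (c < t → h t ≤ 0) := by
  let P : Set ℝ := insert a {t ∈ Icc a b | 0 < h t}
  have hPb : ∀ t ∈ P, t ≤ b := by rintro t (rfl | ht); exacts [hab, ht.1.2]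
  have hP : BddAbove P := ⟨b, hPb⟩
  have ha : a ∈ P := mem_insert _ _
  refine ⟨sSup P, ⟨le_csSup hP ha, csSup_le ⟨a, ha⟩ hPb⟩,
    fun t ht => ⟨fun htc => ?_, fun hct => ?_⟩⟩
  · obtain ⟨s, rfl | ⟨hs, hs0⟩, hts⟩ := exists_lt_of_lt_csSup ⟨a, ha⟩ htc
    · exact absurd ht.1 hts.not_ge
    · exact hh t ht s hs hts.le hs0
  · by_contra! ht0
    exact hct.not_ge (le_csSup hP (mem_insert_of_mem _ ⟨ht, ht0⟩))

theorem integral_id_mul_le_of_single_crossing {f g : ℝ → ℝ} (hf : Continuous f)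
    (hg : Continuous g) {a b : ℝ} (hab : a ≤ b) (harea : ∫ t in a..b, f t = ∫ t in a..b, g t)
    (hcross : ∀ s ∈ Icc a b, ∀ t ∈ Icc a b, s ≤ t → g t < f t → g s ≤ f s) :
    ∫ t in a..b, t * f t ≤ ∫ t in a..b, t * g t := by
  obtain ⟨c, -, hc⟩ := exists_sign_change (h := fun t => f t - g t) hab
    (by simpa only [sub_pos, sub_nonneg] using hcross)
  have hle : ∫ t in a..b, (t - c) * f t ≤ ∫ t in a..b, (t - c) * g t := by
    refine intervalIntegral.integral_mono_on hab (Continuous.intervalIntegrable (by fun_prop) _ _)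
      (Continuous.intervalIntegrable (by fun_prop) _ _) fun t ht => ?_
    rcases lt_trichotomy t c with htc | rfl | htc
    · exact mul_le_mul_of_nonpos_left (sub_nonneg.1 ((hc t ht).1 htc)) (sub_nonpos.2 htc.le)
    · simp
    · exact mul_le_mul_of_nonneg_left (sub_nonpos.1 ((hc t ht).2 htc)) (sub_nonneg.2 htc.le)
  have hsplit (k : ℝ → ℝ) (hk : Continuous k) :
      ∫ t in a..b, (t - c) * k t = (∫ t in a..b, t * k t) - c * ∫ t in a..b, k t := by
    simp only [sub_mul]
    rw [intervalIntegral.integral_sub (Continuous.intervalIntegrable (by fun_prop) _ _)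
      (Continuous.intervalIntegrable (by fun_prop) _ _), intervalIntegral.integral_const_mul]
  rw [hsplit f hf, hsplit g hg, harea] at hle
  linarith

/-- The line `t ↦ a + b * t` clamped between an obstacle `lo` from below and an obstacle `hi` from
above; these are the curves of least energy between the obstacles with given area and moment. -/
noncomputable def clampedLine (lo hi : ℝ → ℝ) (a b t : ℝ) : ℝ := max (lo t) (min (hi t) (a + b * t))

namespace clampedLine

variable {lo hi f : ℝ → ℝ} {a a' b t T : ℝ}

theorem mem_Icc (h : lo t ≤ hi t) : clampedLine lo hi a b t ∈ Icc (lo t) (hi t) :=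
  ⟨le_max_left _ _, max_le h (min_le_left _ _)⟩

theorem line_le (h : clampedLine lo hi a b t < hi t) : a + b * t ≤ clampedLine lo hi a b t :=
  (min_le_iff.1 (le_max_right _ _)).resolve_left h.not_ge

theorem le_line (h : lo t < clampedLine lo hi a b t) : clampedLine lo hi a b t ≤ a + b * t :=
  ((le_max_iff.1 (le_refl (clampedLine lo hi a b t))).resolve_left h.not_ge).trans
    (min_le_right _ _)

theorem eq_lower (h : a + b * t ≤ lo t) : clampedLine lo hi a b t = lo t :=
  max_eq_left ((min_le_right _ _).trans h)

theorem eq_upper (hle : lo t ≤ hi t) (h : hi t ≤ a + b * t) : clampedLine lo hi a b t = hi t := by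
  rw [clampedLine, min_eq_left h, max_eq_right hle]

theorem eq_line (hlo : lo t ≤ a + b * t) (hhi : a + b * t ≤ hi t) :
    clampedLine lo hi a b t = a + b * t := by
  rw [clampedLine, min_eq_right hhi, max_eq_right hlo]

theorem lipschitzWith (hlo : LipschitzWith 1 lo) (hhi : LipschitzWith 1 hi) (hb : |b| ≤ 1) :
    LipschitzWith 1 (clampedLine lo hi a b) := by
  have hline : LipschitzWith 1 fun t => a + b * t := by
    refine lipschitzWith_one_of_le_add fun s t => ?_
    have hbst : b * (s - t) ≤ 1 * |s - t| :=
      (le_abs_self _).trans (abs_mul b _ ▸ mul_le_mul_of_nonneg_right hb (abs_nonneg _))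
    linarith
  have hmax := hlo.max (hhi.min hline)
  rwa [max_self, max_self] at hmax

theorem sq_le (hf : f t ∈ Icc (lo t) (hi t)) :
    clampedLine lo hi a b t ^ 2 ≤
      f t ^ 2 - 2 * (a + b * t) * (f t - clampedLine lo hi a b t) := by
  have hmul : 0 ≤ (f t - clampedLine lo hi a b t) * (clampedLine lo hi a b t - (a + b * t)) := by
    rcases lt_trichotomy (clampedLine lo hi a b t) (f t) with h | h | h
    · exact mul_nonneg (sub_nonneg.2 h.le) (sub_nonneg.2 (line_le (h.trans_le hf.2)))
    · rw [h, sub_self, zero_mul]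
    · exact mul_nonneg_of_nonpos_of_nonpos (sub_nonpos.2 h.le)
        (sub_nonpos.2 (le_line (hf.1.trans_lt h)))
  linarith [sq_nonneg (f t - clampedLine lo hi a b t)]

theorem continuous_comp {X : Type*} [TopologicalSpace X] {lo hi : X → ℝ → ℝ} {a b t : X → ℝ}
    (hlo : Continuous fun x => lo x (t x)) (hhi : Continuous fun x => hi x (t x))
    (ha : Continuous a) (hb : Continuous b) (ht : Continuous t) :
    Continuous fun x => clampedLine (lo x) (hi x) (a x) (b x) (t x) :=
  hlo.max (hhi.min (ha.add (hb.mul ht)))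

theorem continuous (hlo : Continuous lo) (hhi : Continuous hi) :
    Continuous (clampedLine lo hi a b) :=
  continuous_comp hlo hhi continuous_const continuous_const continuous_id

theorem integral_sq_le (hlo : Continuous lo) (hhi : Continuous hi) (hf : Continuous f)
    (hT : 0 ≤ T) (hmem : ∀ t ∈ Icc 0 T, f t ∈ Icc (lo t) (hi t))
    (harea : ∫ t in (0 : ℝ)..T, clampedLine lo hi a b t = ∫ t in (0 : ℝ)..T, f t)
    (hmoment : ∫ t in (0 : ℝ)..T, t * clampedLine lo hi a b t = ∫ t in (0 : ℝ)..T, t * f t) :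
    ∫ t in (0 : ℝ)..T, clampedLine lo hi a b t ^ 2 ≤ ∫ t in (0 : ℝ)..T, f t ^ 2 := by
  have hcl : Continuous (clampedLine lo hi a b) := continuous hlo hhi
  have hint (g : ℝ → ℝ) (hg : Continuous g) : IntervalIntegrable g volume 0 T :=
    hg.intervalIntegrable _ _
  calc ∫ t in (0 : ℝ)..T, clampedLine lo hi a b t ^ 2
      ≤ ∫ t in (0 : ℝ)..T, (f t ^ 2 - 2 * a * (f t - clampedLine lo hi a b t) -
          2 * b * (t * f t - t * clampedLine lo hi a b t)) := by
        refine intervalIntegral.integral_mono_on hT (hint _ (by fun_prop)) (hint _ (by fun_prop))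
          fun t ht => (sq_le (a := a) (b := b) (hmem t ht)).trans_eq (by ring)
    _ = ∫ t in (0 : ℝ)..T, f t ^ 2 := by
        rw [intervalIntegral.integral_sub (hint _ (by fun_prop)) (hint _ (by fun_prop)),
          intervalIntegral.integral_sub (hint _ (by fun_prop)) (hint _ (by fun_prop)),
          intervalIntegral.integral_const_mul, intervalIntegral.integral_const_mul,
          intervalIntegral.integral_sub (hint _ (by fun_prop)) (hint _ (by fun_prop)),
          intervalIntegral.integral_sub (hint _ (by fun_prop)) (hint _ (by fun_prop)),
          harea, hmoment]
        ring

theorem mono_left (h : a ≤ a') : clampedLine lo hi a b t ≤ clampedLine lo hi a' b t := by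
  unfold clampedLine
  gcongr

theorem exists_area_eq (hlo : Continuous lo) (hhi : Continuous hi) (hf : Continuous f)
    (hT : 0 ≤ T) (hmem : ∀ t ∈ Icc 0 T, f t ∈ Icc (lo t) (hi t)) {M : ℝ}
    (hM : ∀ t ∈ Icc 0 T, t - M ≤ lo t ∧ hi t ≤ M - t) (hb : |b| ≤ 1) :
    ∃ a ∈ Icc (-M) M, ∫ t in (0 : ℝ)..T, clampedLine lo hi a b t = ∫ t in (0 : ℝ)..T, f t := by
  have hbt : ∀ t ∈ Icc 0 T, |b * t| ≤ t := fun t ht => by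
    rw [abs_mul, abs_of_nonneg ht.1]
    exact mul_le_of_le_one_left ht.1 hb
  have hlow : ∫ t in (0 : ℝ)..T, clampedLine lo hi (-M) b t = ∫ t in (0 : ℝ)..T, lo t :=
    intervalIntegral.integral_congr fun t ht => by
      rw [uIcc_of_le hT] at ht
      exact eq_lower (by linarith [(hM t ht).1, (abs_le.1 (hbt t ht)).2])
  have hupp : ∫ t in (0 : ℝ)..T, clampedLine lo hi M b t = ∫ t in (0 : ℝ)..T, hi t :=
    intervalIntegral.integral_congr fun t ht => by
      rw [uIcc_of_le hT] at ht
      exact eq_upper ((hmem t ht).1.trans (hmem t ht).2)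
        (by linarith [(hM t ht).2, (abs_le.1 (hbt t ht)).1])
  have h0 : (0 : ℝ) ∈ Icc 0 T := left_mem_Icc.2 hT
  have hMM : -M ≤ M := by
    linarith [(hM 0 h0).1, (hM 0 h0).2, (hmem 0 h0).1, (hmem 0 h0).2]
  refine intermediate_value_Icc hMM (Continuous.continuousOn ?_)
    ⟨hlow.trans_le ?_, le_of_le_of_eq ?_ hupp.symm⟩
  · exact intervalIntegral.continuous_parametric_intervalIntegral_of_continuous'
      (continuous_comp (by fun_prop) (by fun_prop) (by fun_prop) (by fun_prop) (by fun_prop)) _ _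
  · exact intervalIntegral.integral_mono_on hT (hlo.intervalIntegrable _ _)
      (hf.intervalIntegrable _ _) fun t ht => (hmem t ht).1
  · exact intervalIntegral.integral_mono_on hT (hf.intervalIntegrable _ _)
      (hhi.intervalIntegrable _ _) fun t ht => (hmem t ht).2

theorem moment_le_moment_slope_one (hlo : Continuous lo) (hhi : Continuous hi)
    (hf : LipschitzWith 1 f) (hT : 0 ≤ T) (hmem : ∀ t ∈ Icc 0 T, f t ∈ Icc (lo t) (hi t))
    (harea : ∫ t in (0 : ℝ)..T, clampedLine lo hi a 1 t = ∫ t in (0 : ℝ)..T, f t) :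
    ∫ t in (0 : ℝ)..T, t * f t ≤ ∫ t in (0 : ℝ)..T, t * clampedLine lo hi a 1 t := by
  refine integral_id_mul_le_of_single_crossing hf.continuous (continuous hlo hhi) hT harea.symm
    fun s hs t ht hst hlt => ?_
  refine max_le (hmem s hs).1 ((min_le_right _ _).trans ?_)
  have hlip := le_add_abs_sub_of_lipschitz hf t s
  rw [abs_of_nonneg (sub_nonneg.2 hst)] at hlip
  linarith [line_le (hlt.trans_le (hmem t ht).2)]

theorem moment_slope_neg_one_le_moment (hlo : Continuous lo) (hhi : Continuous hi)
    (hf : LipschitzWith 1 f) (hT : 0 ≤ T) (hmem : ∀ t ∈ Icc 0 T, f t ∈ Icc (lo t) (hi t))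
    (harea : ∫ t in (0 : ℝ)..T, clampedLine lo hi a (-1) t = ∫ t in (0 : ℝ)..T, f t) :
    ∫ t in (0 : ℝ)..T, t * clampedLine lo hi a (-1) t ≤ ∫ t in (0 : ℝ)..T, t * f t := by
  refine integral_id_mul_le_of_single_crossing (continuous hlo hhi) hf.continuous hT harea
    fun s hs t ht hst hlt => ?_
  refine (le_min (hmem s hs).2 ?_).trans (le_max_right _ _)
  have hlip := le_add_abs_sub_of_lipschitz hf s t
  rw [abs_sub_comm, abs_of_nonneg (sub_nonneg.2 hst)] at hlip
  linarith [le_line ((hmem t ht).1.trans_lt hlt)]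

theorem moment_eq_of_area_eq (hlo : Continuous lo) (hhi : Continuous hi) (hT : 0 ≤ T)
    (harea : ∫ t in (0 : ℝ)..T, clampedLine lo hi a b t =
      ∫ t in (0 : ℝ)..T, clampedLine lo hi a' b t) :
    ∫ t in (0 : ℝ)..T, t * clampedLine lo hi a b t =
      ∫ t in (0 : ℝ)..T, t * clampedLine lo hi a' b t := by
  wlog haa : a ≤ a' generalizing a a' with hwlog
  · exact (hwlog harea.symm (le_of_not_ge haa)).symm
  refine le_antisymm ?_ ?_ <;>
    refine integral_id_mul_le_of_single_crossing (continuous hlo hhi) (continuous hlo hhi) hT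
      (by first | exact harea | exact harea.symm) fun s _ t _ _ hlt => ?_
  · exact absurd (mono_left haa) hlt.not_ge
  · exact mono_left haa

theorem exists_area_moment_eq (hlo : Continuous lo) (hhi : Continuous hi)
    (hf : LipschitzWith 1 f) (hT : 0 ≤ T) (hmem : ∀ t ∈ Icc 0 T, f t ∈ Icc (lo t) (hi t)) {M : ℝ}
    (hM : ∀ t ∈ Icc 0 T, t - M ≤ lo t ∧ hi t ≤ M - t) :
    ∃ a ∈ Icc (-M) M, ∃ b ∈ Icc (-1 : ℝ) 1,
      ∫ t in (0 : ℝ)..T, clampedLine lo hi a b t = ∫ t in (0 : ℝ)..T, f t ∧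
      ∫ t in (0 : ℝ)..T, t * clampedLine lo hi a b t = ∫ t in (0 : ℝ)..T, t * f t := by
  let area : ℝ × ℝ → ℝ := fun x => ∫ t in (0 : ℝ)..T, clampedLine lo hi x.1 x.2 t
  let moment : ℝ × ℝ → ℝ := fun x => ∫ t in (0 : ℝ)..T, t * clampedLine lo hi x.1 x.2 t
  have hcl : Continuous fun x : (ℝ × ℝ) × ℝ => clampedLine lo hi x.1.1 x.1.2 x.2 :=
    continuous_comp (by fun_prop) (by fun_prop) (by fun_prop) (by fun_prop) (by fun_prop)
  have harea : Continuous area :=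
    intervalIntegral.continuous_parametric_intervalIntegral_of_continuous' hcl _ _
  have hmoment : Continuous moment :=
    intervalIntegral.continuous_parametric_intervalIntegral_of_continuous'
      (continuous_snd.mul hcl) _ _
  let K : Set (ℝ × ℝ) := Icc (-M) M ×ˢ Icc (-1) 1 ∩ area ⁻¹' {∫ t in (0 : ℝ)..T, f t}
  have hK : IsCompact K :=
    (isCompact_Icc.prod isCompact_Icc).inter_right (isClosed_singleton.preimage harea)
  have hex : ∀ b ∈ Icc (-1 : ℝ) 1, ∃ a, (a, b) ∈ K := fun b hb => by
    obtain ⟨a, ha, haf⟩ := exists_area_eq hlo hhi hf.continuous hT hmem hM (abs_le.2 hb)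
    exact ⟨a, ⟨ha, hb⟩, haf⟩
  have himage : Prod.snd '' K = Icc (-1) 1 := by
    refine Subset.antisymm (image_subset_iff.2 fun x hx => hx.1.2) fun b hb => ?_
    exact (hex b hb).imp' (·, b) fun a ha => ⟨ha, rfl⟩
  have hconn : IsPreconnected (moment '' K) :=
    isPreconnected_image_of_eq_on_fibers hK continuous_snd hmoment (himage ▸ isPreconnected_Icc)
      fun x hx y hy hxy => by
        obtain ⟨a, b⟩ := x
        obtain ⟨a', b'⟩ := y
        obtain rfl : b = b' := hxy
        exact moment_eq_of_area_eq hlo hhi hT (hx.2.trans hy.2.symm)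
  obtain ⟨a₀, ha₀⟩ := hex (-1) (by norm_num)
  obtain ⟨a₁, ha₁⟩ := hex 1 (by norm_num)
  obtain ⟨⟨a, b⟩, ⟨⟨ha, hb⟩, haf⟩, hm⟩ := hconn.Icc_subset ⟨_, ha₀, rfl⟩ ⟨_, ha₁, rfl⟩
    ⟨moment_slope_neg_one_le_moment hlo hhi hf hT hmem ha₀.2,
      moment_le_moment_slope_one hlo hhi hf hT hmem ha₁.2⟩
  exact ⟨a, ha, b, hb, haf, hm⟩

end clampedLine

/-- The least curve with slopes `±1` on `[0, T]` that climbs at least up to time `s` and ends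
at `X`. -/
noncomputable def lowerEnvelope (X T s t : ℝ) : ℝ := max (min t (2 * s - t)) (X - T + t)

/-- The greatest `1`-Lipschitz curve on `[0, T]` from `0` to `X`. -/
noncomputable def upperEnvelope (X T t : ℝ) : ℝ := min t (X + T - t)

/-- A curve from `0` to `X` on `[0, T]` that climbs until time `s` and then follows the line
`t ↦ a + b * t` as far as the envelopes allow. -/
noncomputable def bridge (X T s a b : ℝ) : ℝ → ℝ :=
  clampedLine (lowerEnvelope X T s) (upperEnvelope X T) a b

theorem lipschitzWith_min_sub_self (c : ℝ) : LipschitzWith 1 fun t : ℝ => min t (c - t) := by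
  have h := LipschitzWith.id.min ((LipschitzWith.const c).sub (LipschitzWith.id (α := ℝ)))
  rwa [zero_add, max_self] at h

theorem lipschitzWith_lowerEnvelope (X T s : ℝ) : LipschitzWith 1 (lowerEnvelope X T s) := by
  have h := (lipschitzWith_min_sub_self (2 * s)).max
    ((LipschitzWith.const (X - T)).add LipschitzWith.id)
  rwa [zero_add, max_self] at h

theorem lipschitzWith_upperEnvelope (X T : ℝ) : LipschitzWith 1 (upperEnvelope X T) :=
  lipschitzWith_min_sub_self (X + T)

theorem lowerEnvelope_mono_right {X T s s' t : ℝ} (h : s ≤ s') :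
    lowerEnvelope X T s t ≤ lowerEnvelope X T s' t := by
  unfold lowerEnvelope
  gcongr

theorem mem_Icc_envelopes {ξ : ℝ → ℝ} (hξ : LipschitzWith 1 ξ) (hξ0 : ξ 0 = 0) {T t : ℝ}
    (ht : t ∈ Icc 0 T) : ξ t ∈ Icc (lowerEnvelope (ξ T) T 0 t) (upperEnvelope (ξ T) T t) := by
  have h₁ := le_add_abs_sub_of_lipschitz hξ t 0
  have h₂ := le_add_abs_sub_of_lipschitz hξ 0 t
  have h₃ := le_add_abs_sub_of_lipschitz hξ t T
  have h₄ := le_add_abs_sub_of_lipschitz hξ T t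
  rw [abs_sub_comm, sub_zero, abs_of_nonneg ht.1] at h₂
  rw [sub_zero, abs_of_nonneg ht.1] at h₁
  rw [abs_sub_comm, abs_of_nonneg (sub_nonneg.2 ht.2)] at h₃
  rw [abs_of_nonneg (sub_nonneg.2 ht.2)] at h₄
  exact ⟨max_le ((min_le_right _ _).trans (by linarith)) (by linarith),
    le_min (by linarith) (by linarith)⟩

namespace bridge

variable {X T s a b t : ℝ}

theorem lipschitzWith (hb : |b| ≤ 1) : LipschitzWith 1 (bridge X T s a b) :=
  clampedLine.lipschitzWith (lipschitzWith_lowerEnvelope X T s) (lipschitzWith_upperEnvelope X T) hb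

theorem apply_right (h : lowerEnvelope X T s T ≤ upperEnvelope X T T) : bridge X T s a b T = X := by
  obtain ⟨hlow, hupp⟩ := clampedLine.mem_Icc (a := a) (b := b) h
  refine le_antisymm (hupp.trans ?_) (le_trans ?_ hlow)
  · simp [upperEnvelope]
  · simp [lowerEnvelope]

section FourArcs

variable {p q r d : ℝ}

theorem lowerEnvelope_le_upperEnvelope (hr : 0 ≤ r) (hq : 0 ≤ q) (hd : 0 ≤ d)
    (ht : t ≤ p + q + r + d) :
    lowerEnvelope (p - q + r - d) (p + q + r + d) p t ≤
      upperEnvelope (p - q + r - d) (p + q + r + d) t :=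
  max_le (min_le_min_left _ (by linarith)) (le_min (by linarith) (by linarith))

theorem eq_four_arcs (hq : 0 ≤ q) (hr : 0 ≤ r) (hd : 0 ≤ d) :
    let f := bridge (p - q + r - d) (p + q + r + d) p (-2 * q) 1
    (∀ t ∈ Icc 0 p, f t = t) ∧ (∀ t ∈ Icc p (p + q), f t = 2 * p - t) ∧
      (∀ t ∈ Icc (p + q) (p + q + r), f t = t - 2 * q) ∧
      ∀ t ∈ Icc (p + q + r) (p + q + r + d), f t = 2 * p + 2 * r - t := by
  simp only [bridge, clampedLine, lowerEnvelope, upperEnvelope]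
  refine ⟨?_, ?_, ?_, ?_⟩ <;> rintro t ⟨h₁, h₂⟩ <;> grind

theorem ofCurve_eq_fiveArc (hp : 0 ≤ p) (hq : 0 ≤ q) (hr : 0 ≤ r) (hd : 0 ≤ d) :
    PathMoments.ofCurve (bridge (p - q + r - d) (p + q + r + d) p (-2 * q) 1) (p + q + r + d) =
      PathMoments.fiveArc p q r d 0 := by
  obtain ⟨h₁, h₂, h₃, h₄⟩ := eq_four_arcs (p := p) hq hr hd
  have hcont : Continuous (bridge (p - q + r - d) (p + q + r + d) p (-2 * q) 1) :=
    (lipschitzWith (by simp)).continuous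
  set f := bridge (p - q + r - d) (p + q + r + d) p (-2 * q) 1
  have h0 : f 0 = 0 := h₁ 0 ⟨le_rfl, hp⟩
  have hup : PathMoments.ofCurve f p = PathMoments.origin.arc 1 p := by
    rw [← PathMoments.ofCurve_zero h0, ← PathMoments.ofCurve_add hcont (one_pow 2) hp, zero_add]
    intro s hs
    rw [zero_add] at hs
    rw [h₁ s hs, h0]
    ring
  rw [PathMoments.ofCurve_add hcont neg_one_sq hd, PathMoments.ofCurve_add hcont (one_pow 2) hr,
    PathMoments.ofCurve_add hcont neg_one_sq hq, hup, PathMoments.fiveArc, PathMoments.arc_zero]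
  · intro s hs
    rw [h₂ s hs, h₂ p ⟨le_rfl, by linarith⟩]
    ring
  · intro s hs
    rw [h₃ s hs, h₃ (p + q) ⟨le_rfl, by linarith⟩]
    ring
  · intro s hs
    rw [h₄ s hs, h₄ (p + q + r) ⟨le_rfl, by linarith⟩]
    ring

end FourArcs

theorem continuous_uncurry (X T : ℝ) :
    Continuous fun x : (ℝ × ℝ × ℝ) × ℝ => bridge X T x.1.1 x.1.2.1 x.1.2.2 x.2 := by
  simp only [bridge, clampedLine, lowerEnvelope, upperEnvelope]
  fun_prop

theorem exists_area_moment_eq {y : ℝ → ℝ} (hy : LipschitzWith 1 y) (hT : 0 ≤ T)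
    (hmem : ∀ t ∈ Icc 0 T, y t ∈ Icc (lowerEnvelope X T s t) (upperEnvelope X T t)) :
    ∃ a ∈ Icc (-(T + |X|)) (T + |X|), ∃ b ∈ Icc (-1 : ℝ) 1,
      ∫ t in (0 : ℝ)..T, bridge X T s a b t = ∫ t in (0 : ℝ)..T, y t ∧
      ∫ t in (0 : ℝ)..T, t * bridge X T s a b t = ∫ t in (0 : ℝ)..T, t * y t :=
  clampedLine.exists_area_moment_eq (lipschitzWith_lowerEnvelope X T s).continuous
    (lipschitzWith_upperEnvelope X T).continuous hy hT hmem fun _ _ =>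
      ⟨le_max_of_le_right (by linarith [neg_abs_le X]),
        (min_le_right _ _).trans (by linarith [le_abs_self X])⟩

theorem integral_sq_le {f : ℝ → ℝ} (hf : Continuous f) (hT : 0 ≤ T)
    (hmem : ∀ t ∈ Icc 0 T, f t ∈ Icc (lowerEnvelope X T s t) (upperEnvelope X T t))
    (harea : ∫ t in (0 : ℝ)..T, bridge X T s a b t = ∫ t in (0 : ℝ)..T, f t)
    (hmoment : ∫ t in (0 : ℝ)..T, t * bridge X T s a b t = ∫ t in (0 : ℝ)..T, t * f t) :
    ∫ t in (0 : ℝ)..T, bridge X T s a b t ^ 2 ≤ ∫ t in (0 : ℝ)..T, f t ^ 2 :=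
  clampedLine.integral_sq_le (lipschitzWith_lowerEnvelope X T s).continuous
    (lipschitzWith_upperEnvelope X T).continuous hf hT hmem harea hmoment

/-- The triples `(s, a, b)` with `s ∈ [0, p]` whose bridge has the same area and moment as `y`; the
bound on `a` makes the set compact. -/
def matching (X T p : ℝ) (y : ℝ → ℝ) : Set (ℝ × ℝ × ℝ) :=
  {x | x ∈ Icc 0 p ×ˢ Icc (-(T + |X|)) (T + |X|) ×ˢ Icc (-1 : ℝ) 1 ∧
    ∫ t in (0 : ℝ)..T, bridge X T x.1 x.2.1 x.2.2 t = ∫ t in (0 : ℝ)..T, y t ∧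
    ∫ t in (0 : ℝ)..T, t * bridge X T x.1 x.2.1 x.2.2 t = ∫ t in (0 : ℝ)..T, t * y t}

theorem isCompact_matching (X T p : ℝ) (y : ℝ → ℝ) : IsCompact (matching X T p y) := by
  have harea : Continuous fun x : ℝ × ℝ × ℝ =>
      ∫ t in (0 : ℝ)..T, bridge X T x.1 x.2.1 x.2.2 t :=
    intervalIntegral.continuous_parametric_intervalIntegral_of_continuous'
      (continuous_uncurry X T) _ _
  have hmoment : Continuous fun x : ℝ × ℝ × ℝ =>
      ∫ t in (0 : ℝ)..T, t * bridge X T x.1 x.2.1 x.2.2 t :=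
    intervalIntegral.continuous_parametric_intervalIntegral_of_continuous'
      (continuous_snd.mul (continuous_uncurry X T)) _ _
  exact (isCompact_Icc.prod (isCompact_Icc.prod isCompact_Icc)).inter_right
    ((isClosed_eq harea continuous_const).inter (isClosed_eq hmoment continuous_const))

-- For fixed `s` every matching bridge minimizes the energy, which thus depends on `s` alone.
theorem isPreconnected_energy_matching {p : ℝ} {y : ℝ → ℝ} (hy : LipschitzWith 1 y) (hT : 0 ≤ T)
    (hmem : ∀ t ∈ Icc 0 T, y t ∈ Icc (lowerEnvelope X T p t) (upperEnvelope X T t)) :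
    IsPreconnected ((fun x : ℝ × ℝ × ℝ => ∫ t in (0 : ℝ)..T, bridge X T x.1 x.2.1 x.2.2 t ^ 2) ''
      matching X T p y) := by
  have hmem' : ∀ s ≤ p, ∀ t ∈ Icc 0 T,
      y t ∈ Icc (lowerEnvelope X T s t) (upperEnvelope X T t) := fun s hs t ht =>
    ⟨(lowerEnvelope_mono_right hs).trans (hmem t ht).1, (hmem t ht).2⟩
  have himage : Prod.fst '' matching X T p y = Icc 0 p := by
    refine Subset.antisymm (image_subset_iff.2 fun x hx => hx.1.1) fun s hs => ?_
    obtain ⟨a, ha, b, hb, hA, hB⟩ := exists_area_moment_eq hy hT (hmem' s hs.2)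
    exact ⟨(s, a, b), ⟨⟨hs, ha, hb⟩, hA, hB⟩, rfl⟩
  have hle : ∀ x ∈ matching X T p y, ∀ x' ∈ matching X T p y, x.1 = x'.1 →
      ∫ t in (0 : ℝ)..T, bridge X T x.1 x.2.1 x.2.2 t ^ 2 ≤
        ∫ t in (0 : ℝ)..T, bridge X T x'.1 x'.2.1 x'.2.2 t ^ 2 := fun x hx x' hx' hxx => by
    refine integral_sq_le (lipschitzWith (abs_le.2 hx'.1.2.2)).continuous hT (fun t ht => ?_)
      (hx.2.1.trans hx'.2.1.symm) (hx.2.2.trans hx'.2.2.symm)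
    rw [hxx]
    have hxt := hmem' x'.1 hx'.1.1.2 t ht
    exact clampedLine.mem_Icc (hxt.1.trans hxt.2)
  refine isPreconnected_image_of_eq_on_fibers (isCompact_matching X T p y) continuous_fst ?_
    (himage ▸ isPreconnected_Icc) fun x hx x' hx' hxx =>
      le_antisymm (hle x hx x' hx' hxx) (hle x' hx' x hx hxx.symm)
  exact intervalIntegral.continuous_parametric_intervalIntegral_of_continuous'
    ((continuous_uncurry X T).pow 2) _ _

open PathMoments in
theorem exists_ofCurve_eq_of_energyLE {ξ : ℝ → ℝ} (hξ : LipschitzWith 1 ξ) (hξ0 : ξ 0 = 0)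
    {p q r d : ℝ} (hp : 0 ≤ p) (hq : 0 ≤ q) (hr : 0 ≤ r) (hd : 0 ≤ d)
    (hle : EnergyLE (ofCurve ξ T) (fiveArc p q r d 0)) :
    ∃ s ∈ Icc 0 ((ξ T + T) / 2), ∃ a, ∃ b ∈ Icc (-1 : ℝ) 1,
      ofCurve (bridge (ξ T) T s a b) T = ofCurve ξ T := by
  obtain rfl : p + q + r + d = T := by
    simpa only [fiveArc_time, ofCurve, add_zero] using hle.time_eq
  set T := p + q + r + d
  have hX : p - q + r - d = ξ T := by
    rw [← show (fiveArc p q r d 0).pos = ξ T from hle.pos_eq]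
    simp only [fiveArc, arc, origin]
    ring
  have hT : 0 ≤ T := by positivity
  let y := bridge (ξ T) T p (-2 * q) 1
  have hymoments : ofCurve y T = fiveArc p q r d 0 := by
    simpa only [y, ← hX] using ofCurve_eq_fiveArc hp hq hr hd
  rw [← hymoments] at hle
  have hy : LipschitzWith 1 y := lipschitzWith (by simp)
  have hymem : ∀ t ∈ Icc 0 T, y t ∈ Icc (lowerEnvelope (ξ T) T p t) (upperEnvelope (ξ T) T t) :=
    fun t ht => clampedLine.mem_Icc (hX ▸ lowerEnvelope_le_upperEnvelope hr hq hd ht.2)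
  have hymatch : (p, -2 * q, 1) ∈ matching (ξ T) T p y := by
    refine ⟨⟨⟨hp, le_rfl⟩, ⟨?_, ?_⟩, by norm_num, le_rfl⟩, rfl, rfl⟩ <;> dsimp only
    · linarith [neg_abs_le (ξ T)]
    · linarith [abs_nonneg (ξ T)]
  obtain ⟨a₀, ha₀, b₀, hb₀, hA₀, hB₀⟩ := exists_area_moment_eq (s := 0) hy hT fun t ht =>
    ⟨(lowerEnvelope_mono_right hp).trans (hymem t ht).1, (hymem t ht).2⟩
  have hlow : ∫ t in (0 : ℝ)..T, bridge (ξ T) T 0 a₀ b₀ t ^ 2 ≤ ∫ t in (0 : ℝ)..T, ξ t ^ 2 :=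
    integral_sq_le hξ.continuous hT (fun t ht => mem_Icc_envelopes hξ hξ0 ht)
      (hA₀.trans hle.area_eq) (hB₀.trans hle.moment_eq)
  obtain ⟨⟨s, a, b⟩, ⟨⟨hs, -, hb⟩, hA, hB⟩, hE⟩ :=
    (isPreconnected_energy_matching hy hT hymem).Icc_subset
      ⟨(0, a₀, b₀), ⟨⟨⟨le_rfl, hp⟩, ha₀, hb₀⟩, hA₀, hB₀⟩, rfl⟩ ⟨_, hymatch, rfl⟩
      ⟨hlow, hle.energy_le⟩
  have hyT := hymem T ⟨hT, le_rfl⟩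
  have hend : bridge (ξ T) T s a b T = ξ T :=
    apply_right ((lowerEnvelope_mono_right hs.2).trans (hyT.1.trans hyT.2))
  exact ⟨s, ⟨hs.1, hs.2.trans (by linarith)⟩, a, b, hb,
    PathMoments.ext rfl hend (hA.trans hle.area_eq) (hB.trans hle.moment_eq) hE⟩

end bridge

/-! ### Piecewise constant derivatives -/

/-- `u` is piecewise constant on `[a, b)` with `n` pieces, some of which may be empty. -/
def IsPiecewiseConst (n : ℕ) (a b : ℝ) (u : ℝ → ℝ) : Prop :=
  ∃ τ : Fin (n + 1) → ℝ, Monotone τ ∧ τ 0 = a ∧ τ (Fin.last n) = b ∧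
    ∃ c : Fin n → ℝ, ∀ i : Fin n, ∀ t ∈ Ico (τ i.castSucc) (τ i.succ), u t = c i

namespace IsPiecewiseConst

variable {n : ℕ} {a b r c : ℝ} {u u' : ℝ → ℝ}

theorem of_left_eq_right (u : ℝ → ℝ) (a : ℝ) : IsPiecewiseConst 0 a a u :=
  ⟨fun _ => a, monotone_const, rfl, rfl, 0, fun i => i.elim0⟩

theorem le (h : IsPiecewiseConst n a b u) : a ≤ b := by
  obtain ⟨τ, hτ, rfl, rfl, -⟩ := h
  exact hτ (Fin.zero_le _)

theorem congr (h : IsPiecewiseConst n a b u) (huu' : EqOn u' u (Ico a b)) :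
    IsPiecewiseConst n a b u' := by
  obtain ⟨τ, hτ, rfl, rfl, c, hc⟩ := h
  refine ⟨τ, hτ, rfl, rfl, c, fun i t ht => ?_⟩
  rw [huu' ⟨(hτ (Fin.zero_le _)).trans ht.1, ht.2.trans_le (hτ (Fin.le_last _))⟩, hc i t ht]

theorem neg (h : IsPiecewiseConst n a b u) : IsPiecewiseConst n a b (-u) := by
  obtain ⟨τ, hτ, ha, hb, c, hc⟩ := h
  exact ⟨τ, hτ, ha, hb, -c, fun i t ht => congrArg Neg.neg (hc i t ht)⟩

theorem truncate (h : IsPiecewiseConst n a b u) (hr : r ∈ Icc a b) :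
    IsPiecewiseConst n a r u := by
  obtain ⟨τ, hτ, rfl, rfl, c, hc⟩ := h
  refine ⟨fun i => min (τ i) r, fun i j hij => min_le_min_right r (hτ hij), min_eq_left hr.1,
    min_eq_right hr.2, c, fun i t ht => hc i t ⟨?_, (lt_min_iff.1 ht.2).1⟩⟩
  exact (min_le_iff.1 ht.1).resolve_right (lt_min_iff.1 ht.2).2.not_ge

theorem snoc (h : IsPiecewiseConst n a r u) (hrb : r ≤ b) (hc : ∀ t ∈ Ico r b, u t = c) :
    IsPiecewiseConst (n + 1) a b u := by
  obtain ⟨τ, hτ, rfl, rfl, κ, hκ⟩ := h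
  refine ⟨Fin.snoc τ b, ?_, ?_, Fin.snoc_last _ _, Fin.snoc κ c, fun i => ?_⟩
  · refine Fin.monotone_iff_le_succ.2 fun i => ?_
    cases i using Fin.lastCases with
    | last => simpa using hrb
    | cast i => simpa only [Fin.succ_castSucc, Fin.snoc_castSucc] using hτ (Fin.castSucc_le_succ i)
  · rw [← Fin.castSucc_zero, Fin.snoc_castSucc]
  · cases i using Fin.lastCases with
    | last => simpa using hc
    | cast i => simpa only [Fin.succ_castSucc, Fin.snoc_castSucc] using hκ i

end IsPiecewiseConst

theorem clampedLine.exists_eqOn_cone_line {s T a b : ℝ} (hsT : s ≤ T) (hb : b ∈ Icc (-1 : ℝ) 1) :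
    ∃ σ ∈ Icc (-1 : ℝ) 1, ∃ κ, ∃ r ∈ Icc s T,
      EqOn (clampedLine (fun t => 2 * s - t) id a b) (fun t => κ + σ * t) (Ioo s r) ∧
      EqOn (clampedLine (fun t => 2 * s - t) id a b) (fun t => a + b * t) (Ioo r T) := by
  have hupper : ∀ t, s ≤ t → b * (t - s) ≤ t - s := fun t ht =>
    mul_le_of_le_one_left (sub_nonneg.2 ht) hb.2
  have hlower : ∀ t, s ≤ t → -(t - s) ≤ b * (t - s) := fun t ht => by nlinarith [hb.1]
  rcases le_total s (a + b * s) with h | h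
  · obtain ⟨r, hr, hsign⟩ := exists_sign_change (h := fun t => a + b * t - t) hsT
      fun p _ t _ hpt h0 => by nlinarith [hb.2]
    refine ⟨1, ⟨by norm_num, le_rfl⟩, 0, r, hr, fun t ht => ?_, fun t ht => ?_⟩
    · have hle := (hsign t ⟨ht.1.le, ht.2.le.trans hr.2⟩).1 ht.2
      rw [eq_upper (show 2 * s - t ≤ t by linarith [ht.1]) (sub_nonneg.1 hle)]
      simp only [id, zero_add, one_mul]
    · have hst := hr.1.trans ht.1.le
      have hle := (hsign t ⟨hst, ht.2.le⟩).2 ht.1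
      exact eq_line (by linarith [hlower t hst]) (sub_nonpos.1 hle)
  · obtain ⟨r, hr, hsign⟩ := exists_sign_change (h := fun t => 2 * s - t - (a + b * t)) hsT
      fun p _ t _ hpt h0 => by nlinarith [hb.1]
    refine ⟨-1, ⟨le_rfl, by norm_num⟩, 2 * s, r, hr, fun t ht => ?_, fun t ht => ?_⟩
    · have hle := (hsign t ⟨ht.1.le, ht.2.le.trans hr.2⟩).1 ht.2
      rw [eq_lower (sub_nonneg.1 hle)]
      ring
    · have hst := hr.1.trans ht.1.le
      have hle := (hsign t ⟨hst, ht.2.le⟩).2 ht.1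
      exact eq_line (sub_nonpos.1 hle) (show a + b * t ≤ t by linarith [hupper t hst])

/-- On `[a, b]` the function `f` has almost everywhere a derivative with values in `[-1, 1]` that
is piecewise constant with `n` pieces. -/
def HasPiecewiseConstDeriv (n : ℕ) (a b : ℝ) (f : ℝ → ℝ) : Prop :=
  ∃ u : ℝ → ℝ, (∀ t, u t ∈ Icc (-1 : ℝ) 1) ∧ IsPiecewiseConst n a b u ∧
    ∀ᵐ t, t ∈ Ioo a b → HasDerivAt f (u t) t

namespace HasPiecewiseConstDeriv

variable {n : ℕ} {X a b r s c k : ℝ} {f g : ℝ → ℝ}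

theorem of_left_eq_right (f : ℝ → ℝ) (a : ℝ) : HasPiecewiseConstDeriv 0 a a f :=
  ⟨0, fun _ => by simp, .of_left_eq_right _ _, by simp⟩

theorem congr (h : HasPiecewiseConstDeriv n a b f) (hgf : EqOn g f (Ioo a b)) :
    HasPiecewiseConstDeriv n a b g := by
  obtain ⟨u, hu, hpc, hd⟩ := h
  refine ⟨u, hu, hpc, hd.mono fun t ht htab => (ht htab).congr_of_eventuallyEq ?_⟩
  exact hgf.eventuallyEq_of_mem (Ioo_mem_nhds htab.1 htab.2)

theorem neg (h : HasPiecewiseConstDeriv n a b f) : HasPiecewiseConstDeriv n a b (-f) := by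
  obtain ⟨u, hu, hpc, hd⟩ := h
  exact ⟨-u, fun t => ⟨neg_le_neg (hu t).2, neg_le.1 (hu t).1⟩, hpc.neg,
    hd.mono fun t ht htab => (ht htab).neg⟩

theorem truncate (h : HasPiecewiseConstDeriv n a b f) (hr : r ∈ Icc a b) :
    HasPiecewiseConstDeriv n a r f := by
  obtain ⟨u, hu, hpc, hd⟩ := h
  exact ⟨u, hu, hpc.truncate hr, hd.mono fun t ht htar => ht ⟨htar.1, htar.2.trans_le hr.2⟩⟩

theorem snoc (h : HasPiecewiseConstDeriv n a r f) (hrb : r ≤ b) (hc : c ∈ Icc (-1 : ℝ) 1)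
    (hf : EqOn f (fun t => k + c * t) (Ioo r b)) : HasPiecewiseConstDeriv (n + 1) a b f := by
  obtain ⟨u, hu, hpc, hd⟩ := h
  refine ⟨fun t => if t < r then u t else c, fun t => ?_, ?_, ?_⟩
  · dsimp only
    split_ifs
    exacts [hu t, hc]
  · exact (hpc.congr fun t ht => if_pos ht.2).snoc hrb fun t ht => if_neg ht.1.not_gt
  · filter_upwards [hd, Measure.ae_ne volume r] with t ht htr htab
    rcases lt_or_gt_of_ne htr with h | h
    · rw [if_pos h]
      exact ht ⟨htab.1, h⟩
    · rw [if_neg h.not_gt]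
      have hline : HasDerivAt (fun t => k + c * t) c t := by
        simpa using ((hasDerivAt_id t).const_mul c).const_add k
      exact hline.congr_of_eventuallyEq (hf.eventuallyEq_of_mem (Ioo_mem_nhds h htab.2))

theorem min_of_monotone_sub (hg : HasPiecewiseConstDeriv n a b g) (hc : c ∈ Icc (-1 : ℝ) 1)
    (hmono : Monotone fun t => g t - (k + c * t)) :
    HasPiecewiseConstDeriv (n + 1) a b fun t => min (g t) (k + c * t) := by
  obtain ⟨u, -, hpc, -⟩ := id hg
  obtain ⟨r, hr, hsign⟩ := exists_sign_change (h := fun t => k + c * t - g t) hpc.le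
    fun s _ t _ hst ht => by linarith [hmono hst]
  refine ((hg.truncate hr).congr fun t ht => ?_).snoc (c := c) (k := k) hr.2 hc fun t ht => ?_
  · exact min_eq_left (sub_nonneg.1 ((hsign t ⟨ht.1.le, ht.2.le.trans hr.2⟩).1 ht.2))
  · exact min_eq_right (sub_nonpos.1 ((hsign t ⟨hr.1.trans ht.1.le, ht.2.le⟩).2 ht.1))

theorem max_of_antitone_sub (hg : HasPiecewiseConstDeriv n a b g) (hc : c ∈ Icc (-1 : ℝ) 1)
    (hanti : Antitone fun t => g t - (k + c * t)) :
    HasPiecewiseConstDeriv (n + 1) a b fun t => max (g t) (k + c * t) := by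
  have h := (hg.neg.min_of_monotone_sub (k := -k) (c := -c) ⟨neg_le_neg hc.2, neg_le.1 hc.1⟩
    fun s t hst => by simp only [Pi.neg_apply]; linarith [hanti hst]).neg
  refine h.congr fun t _ => ?_
  simp only [Pi.neg_apply, neg_mul, ← neg_add, min_neg_neg, neg_neg]

theorem clamp_right_cone (hg : HasPiecewiseConstDeriv n a b g) (hlip : LipschitzWith 1 g) (X : ℝ) :
    HasPiecewiseConstDeriv (n + 1) a b fun t => max (X - b + t) (min (X + b - t) (g t)) := by
  rcases le_total X (g b) with hX | hX
  · have hmono : Monotone fun t => g t - (X + b + -1 * t) := fun s t hst => by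
      have h := le_add_abs_sub_of_lipschitz hlip s t
      rw [abs_sub_comm, abs_of_nonneg (sub_nonneg.2 hst)] at h
      dsimp only
      linarith
    refine (hg.min_of_monotone_sub ⟨le_rfl, by norm_num⟩ hmono).congr fun t ht => ?_
    have h := le_add_abs_sub_of_lipschitz hlip b t
    rw [abs_of_nonneg (sub_nonneg.2 ht.2.le)] at h
    rw [show X + b - t = X + b + -1 * t by ring, min_comm]
    exact max_eq_right (le_min (by linarith) (by linarith [ht.2]))
  · have hanti : Antitone fun t => g t - (X - b + 1 * t) := fun s t hst => by
      have h := le_add_abs_sub_of_lipschitz hlip t s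
      rw [abs_of_nonneg (sub_nonneg.2 hst)] at h
      dsimp only
      linarith
    refine (hg.max_of_antitone_sub ⟨by norm_num, le_rfl⟩ hanti).congr fun t ht => ?_
    have h := le_add_abs_sub_of_lipschitz hlip t b
    rw [abs_sub_comm, abs_of_nonneg (sub_nonneg.2 ht.2.le)] at h
    simp only [one_mul, max_comm (g t), min_eq_right (show g t ≤ X + b - t by linarith)]

theorem clampedLine_left_arm (hs : 0 ≤ s) {T : ℝ} (hsT : s ≤ T) {β : ℝ}
    (hβ : β ∈ Icc (-1 : ℝ) 1) :
    HasPiecewiseConstDeriv 3 0 T (clampedLine (fun t => min t (2 * s - t)) id k β) := by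
  set f := clampedLine (fun t => min t (2 * s - t)) id k β
  have hclimb : EqOn f (fun t => 0 + 1 * t) (Ioo 0 s) := fun t ht => by
    have hf : f t = max t (min t (k + β * t)) :=
      congrArg (max · _) (min_eq_left (show t ≤ 2 * s - t by linarith [ht.2]))
    simp only [hf, max_eq_left (min_le_left t _), zero_add, one_mul]
  have hfcone : EqOn f (clampedLine (fun t => 2 * s - t) id k β) (Ici s) := fun t ht =>
    congrArg (max · _) (min_eq_right (show 2 * s - t ≤ t by linarith [mem_Ici.1 ht]))
  obtain ⟨σ, hσ, κ, r, hr, hcone, hline⟩ := clampedLine.exists_eqOn_cone_line hsT hβ (a := k)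
  exact (((of_left_eq_right f 0).snoc hs ⟨by norm_num, le_rfl⟩ hclimb).snoc hr.1 hσ
    ((hfcone.mono fun t ht => ht.1.le).trans hcone)).snoc hr.2 hβ
    ((hfcone.mono fun t ht => hr.1.trans ht.1.le).trans hline)

end HasPiecewiseConstDeriv

namespace bridge

variable {X T s a b : ℝ}

theorem apply_zero (hs : 0 ≤ s) (hX : |X| ≤ T) : bridge X T s a b 0 = 0 := by
  obtain ⟨h₁, h₂⟩ := abs_le.1 hX
  rw [bridge, clampedLine, lowerEnvelope, upperEnvelope,
    min_eq_left (show 0 ≤ 2 * s - 0 by linarith), max_eq_left (show X - T + 0 ≤ 0 by linarith),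
    min_eq_left (show 0 ≤ X + T - 0 by linarith)]
  exact max_eq_left (min_le_left _ _)

theorem eq_clamp_right_cone (hsX : 2 * s ≤ X + T) (t : ℝ) :
    bridge X T s a b t = max (X - T + t)
      (min (X + T - t) (clampedLine (fun t => min t (2 * s - t)) id a b t)) := by
  have hle : min t (2 * s - t) ≤ X + T - t := (min_le_right _ _).trans (by linarith)
  simp only [bridge, clampedLine, lowerEnvelope, upperEnvelope, id]
  rw [min_max_distrib_left, min_eq_right hle, max_comm (min t _), max_assoc,
    min_comm t (X + T - t), min_assoc]

theorem hasPiecewiseConstDeriv (hs : 0 ≤ s) (hsX : 2 * s ≤ X + T) (hX : X ≤ T)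
    (hb : b ∈ Icc (-1 : ℝ) 1) : HasPiecewiseConstDeriv 4 0 T (bridge X T s a b) := by
  rw [funext (eq_clamp_right_cone (a := a) (b := b) hsX)]
  exact (HasPiecewiseConstDeriv.clampedLine_left_arm hs (by linarith) hb).clamp_right_cone
    (clampedLine.lipschitzWith (lipschitzWith_min_sub_self (2 * s)) LipschitzWith.id
      (abs_le.2 hb)) X

end bridge

theorem exists_hasPiecewiseConstDeriv_of_energyLE_fiveArc {ξ : ℝ → ℝ} (hξ : LipschitzWith 1 ξ)
    (hξ0 : ξ 0 = 0) {T : ℝ} (hT : 0 ≤ T) {p q r d : ℝ} (hp : 0 ≤ p) (hq : 0 ≤ q) (hr : 0 ≤ r)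
    (hd : 0 ≤ d) (hle : PathMoments.EnergyLE (.ofCurve ξ T) (.fiveArc p q r d 0)) :
    ∃ f : ℝ → ℝ, LipschitzWith 1 f ∧ f 0 = 0 ∧ HasPiecewiseConstDeriv 4 0 T f ∧
      PathMoments.ofCurve f T = .ofCurve ξ T := by
  obtain ⟨s, hs, a, b, hb, heq⟩ := bridge.exists_ofCurve_eq_of_energyLE hξ hξ0 hp hq hr hd hle
  have hξT : |ξ T| ≤ T := by
    simpa [hξ0, Real.dist_eq, abs_of_nonneg hT] using hξ.dist_le_mul T 0
  exact ⟨_, bridge.lipschitzWith (abs_le.2 hb), bridge.apply_zero hs.1 hξT,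
    bridge.hasPiecewiseConstDeriv hs.1 (by linarith [hs.2]) (abs_le.1 hξT).2 hb, heq⟩

theorem exists_hasPiecewiseConstDeriv_ofCurve_eq {ξ : ℝ → ℝ} (hξ : LipschitzWith 1 ξ)
    (hξ0 : ξ 0 = 0) {T : ℝ} (hT : 0 ≤ T) :
    ∃ f : ℝ → ℝ, LipschitzWith 1 f ∧ f 0 = 0 ∧ HasPiecewiseConstDeriv 4 0 T f ∧
      PathMoments.ofCurve f T = .ofCurve ξ T := by
  obtain ⟨p, q, e, d, r, hp, hq, he, hd, hr, hpr, hle⟩ := isFourArcBounded_ofCurve hξ hξ0 hT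
  rcases mul_eq_zero.1 hpr with rfl | rfl
  · have hle' : PathMoments.EnergyLE (.ofCurve (-ξ) T) (.fiveArc q e d r 0) := by
      rw [PathMoments.ofCurve_neg, ← PathMoments.neg_fiveArc_zero_left]
      exact hle.neg
    obtain ⟨f, hf, hf0, hpc, heq⟩ := exists_hasPiecewiseConstDeriv_of_energyLE_fiveArc hξ.neg
      (by rw [Pi.neg_apply, hξ0, neg_zero]) hT hq he hd hr hle'
    refine ⟨-f, hf.neg, by rw [Pi.neg_apply, hf0, neg_zero], hpc.neg, ?_⟩
    rw [PathMoments.ofCurve_neg, heq, PathMoments.ofCurve_neg, PathMoments.neg_neg]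
  · exact exists_hasPiecewiseConstDeriv_of_energyLE_fiveArc hξ hξ0 hT hp hq he hd hle

/-! ### Singular trajectories -/

theorem lipschitzOnWith_of_ae_hasDerivAt {f f' : ℝ → ℝ} {a b : ℝ} {K C : NNReal}
    (hf : LipschitzOnWith K f (Icc a b))
    (hf' : ∀ᵐ t ∂volume.restrict (Icc a b), HasDerivAt f (f' t) t)
    (hC : ∀ᵐ t ∂volume.restrict (Icc a b), |f' t| ≤ C) :
    LipschitzOnWith C f (Icc a b) := by
  rw [ae_restrict_iff' measurableSet_Icc] at hf' hC
  refine LipschitzOnWith.of_dist_le_mul fun s hs t ht => ?_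
  have hsub : uIcc t s ⊆ Icc a b := uIcc_subset_Icc ht hs
  have hac : AbsolutelyContinuousOnInterval f t s :=
    (hf.mono hsub).absolutelyContinuousOnInterval
  rw [Real.dist_eq, ← hac.integral_deriv_eq_sub]
  refine intervalIntegral.norm_integral_le_of_norm_le_const_ae (f := deriv f) ?_
  filter_upwards [hf', hC] with r hr hCr hrts
  have hrab := hsub (uIoc_subset_uIcc hrts)
  rw [(hr hrab).deriv]
  exact hCr hrab

theorem eqOn_of_ae_hasDerivAt_eq {f g : ℝ → ℝ} {a b : ℝ} {K L : NNReal} (hab : a ≤ b)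
    (hf : LipschitzOnWith K f (Icc a b)) (hg : LipschitzOnWith L g (Icc a b)) (ha : f a = g a)
    (hd : ∀ᵐ t ∂volume.restrict (Icc a b), ∃ d, HasDerivAt f d t ∧ HasDerivAt g d t) :
    EqOn f g (Icc a b) := by
  rw [ae_restrict_iff' measurableSet_Icc] at hd
  rw [← uIcc_of_le hab] at hf hg hd ⊢
  obtain ⟨C, hC⟩ := (hf.absolutelyContinuousOnInterval.fun_sub
    hg.absolutelyContinuousOnInterval).const_of_ae_hasDerivAt_zero <| by
      filter_upwards [hd] with t ht htab
      obtain ⟨d, hfd, hgd⟩ := ht htab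
      exact (hfd.fun_sub hgd).congr_deriv (sub_self d)
  intro t ht
  rw [← sub_eq_zero, hC t ht, ← hC a left_mem_uIcc, ha, sub_self]

theorem hasDerivAt_integral {h : ℝ → ℝ} (hh : Continuous h) (a t : ℝ) :
    HasDerivAt (fun t => ∫ s in a..t, h s) (h t) t :=
  intervalIntegral.integral_hasDerivAt_right (hh.intervalIntegrable _ _)
    (hh.stronglyMeasurableAtFilter _ _) hh.continuousAt

theorem locallyLipschitz_integral {h : ℝ → ℝ} (hh : Continuous h) (a : ℝ) :
    LocallyLipschitz fun t => ∫ s in a..t, h s := by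
  refine (contDiff_one_iff_deriv (𝕜 := ℝ).mpr ⟨fun t =>
    (hasDerivAt_integral hh a t).differentiableAt, ?_⟩).locallyLipschitz
  simpa only [funext fun t => (hasDerivAt_integral hh a t).deriv] using hh

theorem IsTraj.exists_lipschitzOnWith {T : ℝ} {x y z v w u1 u2 : ℝ → ℝ}
    (h : IsTraj T x y z v w u1 u2) :
    ∃ K, LipschitzOnWith K x (Icc 0 T) ∧ LipschitzOnWith K y (Icc 0 T) ∧
      LipschitzOnWith K z (Icc 0 T) ∧ LipschitzOnWith K v (Icc 0 T) ∧
      LipschitzOnWith K w (Icc 0 T) := by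
  obtain ⟨⟨K, hK⟩, -⟩ := h
  simp only [LipschitzOnWith, Prod.edist_eq, max_le_iff] at hK
  exact ⟨K, fun s hs t ht => (hK hs ht).1, fun s hs t ht => (hK hs ht).2.1,
    fun s hs t ht => (hK hs ht).2.2.1, fun s hs t ht => (hK hs ht).2.2.2.1,
    fun s hs t ht => (hK hs ht).2.2.2.2⟩

theorem IsTraj.eqOn {T : ℝ} (hT : 0 ≤ T) {x y z v w x' y' z' v' w' u1 u2 : ℝ → ℝ}
    (h : IsTraj T x y z v w u1 u2) (h' : IsTraj T x' y' z' v' w' u1 u2)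
    (h0 : (x 0, y 0, z 0, v 0, w 0) = (x' 0, y' 0, z' 0, v' 0, w' 0)) :
    EqOn (fun t => (x t, y t, z t, v t, w t)) (fun t => (x' t, y' t, z' t, v' t, w' t))
      (Icc 0 T) := by
  obtain ⟨K, hKx, hKy, hKz, hKv, hKw⟩ := h.exists_lipschitzOnWith
  obtain ⟨K', hKx', hKy', hKz', hKv', hKw'⟩ := h'.exists_lipschitzOnWith
  simp only [Prod.mk.injEq] at h0
  obtain ⟨hx0, hy0, hz0, hv0, hw0⟩ := h0
  have hode := h.2.and h'.2
  have hx : EqOn x x' (Icc 0 T) := eqOn_of_ae_hasDerivAt_eq hT hKx hKx' hx0 <|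
    hode.mono fun t ht => ⟨_, ht.1.1, ht.2.1⟩
  have hy : EqOn y y' (Icc 0 T) := eqOn_of_ae_hasDerivAt_eq hT hKy hKy' hy0 <|
    hode.mono fun t ht => ⟨_, ht.1.2.1, ht.2.2.1⟩
  -- The right-hand sides of the remaining equations involve only `x`, `y` and the controls.
  have hode' : ∀ᵐ t ∂volume.restrict (Icc 0 T),
      CartanOde x y z v w u1 u2 t ∧ CartanOde x y z' v' w' u1 u2 t := by
    filter_upwards [hode, ae_restrict_mem measurableSet_Icc] with t ⟨ht, ht'⟩ hmem
    exact ⟨ht, ht.1, ht.2.1, by simpa only [CartanOde, hx hmem, hy hmem] using ht'.2.2⟩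
  intro t ht
  simp only [Prod.mk.injEq]
  exact ⟨hx ht, hy ht,
    eqOn_of_ae_hasDerivAt_eq hT hKz hKz' hz0
      (hode'.mono fun t ht => ⟨_, ht.1.2.2.1, ht.2.2.2.1⟩) ht,
    eqOn_of_ae_hasDerivAt_eq hT hKv hKv' hv0
      (hode'.mono fun t ht => ⟨_, ht.1.2.2.2.1, ht.2.2.2.2.1⟩) ht,
    eqOn_of_ae_hasDerivAt_eq hT hKw hKw' hw0
      (hode'.mono fun t ht => ⟨_, ht.1.2.2.2.2, ht.2.2.2.2.2⟩) ht⟩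

namespace PathMoments

/-- The `z`-coordinate reached by the trajectory with `u2 = 1` whose `x`-coordinate is the curve
with moments `S`. -/
noncomputable def zCoord (S : PathMoments) : ℝ := S.area - S.time * S.pos / 2

/-- The `v`-coordinate reached by the trajectory with `u2 = 1` whose `x`-coordinate is the curve
with moments `S`. -/
noncomputable def vCoord (S : PathMoments) : ℝ := (S.energy + S.time ^ 3 / 3) / 2

/-- The `w`-coordinate reached by the trajectory with `u2 = 1` whose `x`-coordinate is the curve
with moments `S`. -/
noncomputable def wCoord (S : PathMoments) : ℝ :=
  S.moment - S.pos ^ 3 / 6 - S.time ^ 2 * S.pos / 2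

end PathMoments

theorem cartanOde_ofCurve {f u : ℝ → ℝ} {t : ℝ} (hf : Continuous f)
    (hd : HasDerivAt f (u t) t) :
    CartanOde f id (fun t => (PathMoments.ofCurve f t).zCoord)
      (fun t => (PathMoments.ofCurve f t).vCoord) (fun t => (PathMoments.ofCurve f t).wCoord)
      u (fun _ => 1) t := by
  have hid := hasDerivAt_id' t
  have harea := hasDerivAt_integral hf 0 t
  have hmoment := hasDerivAt_integral (h := fun s => s * f s) (by fun_prop) 0 t
  have henergy := hasDerivAt_integral (hf.pow 2) 0 t
  refine ⟨hd, hid, ?_, ?_, ?_⟩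
  · exact (harea.sub ((hid.mul hd).div_const 2)).congr_deriv (by simp only [id]; ring)
  · exact ((henergy.add ((hid.pow 3).div_const 3)).div_const 2).congr_deriv
      (by simp only [id, Pi.pow_apply]; ring)
  · exact ((hmoment.sub ((hd.pow 3).div_const 6)).sub
      (((hid.pow 2).mul hd).div_const 2)).congr_deriv (by simp only [id, Pi.pow_apply]; ring)

theorem isTraj_ofCurve {f u : ℝ → ℝ} {K : NNReal} {T : ℝ} (hf : LipschitzWith K f)
    (hd : ∀ᵐ t ∂volume.restrict (Icc 0 T), HasDerivAt f (u t) t) :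
    IsTraj T f id (fun t => (PathMoments.ofCurve f t).zCoord)
      (fun t => (PathMoments.ofCurve f t).vCoord) (fun t => (PathMoments.ofCurve f t).wCoord)
      u (fun _ => 1) := by
  refine ⟨?_, hd.mono fun t => cartanOde_ofCurve hf.continuous⟩
  have hfc := hf.continuous
  have hdata : LocallyLipschitz fun t => (t, f t, ∫ s in (0 : ℝ)..t, f s,
      ∫ s in (0 : ℝ)..t, s * f s, ∫ s in (0 : ℝ)..t, f s ^ 2) :=
    LocallyLipschitz.id.prodMk <| hf.locallyLipschitz.prodMk <|
      (locallyLipschitz_integral hfc 0).prodMk <|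
      (locallyLipschitz_integral (by fun_prop) 0).prodMk <|
      locallyLipschitz_integral (by fun_prop) 0
  have hpoly : ContDiff ℝ 1 fun p : ℝ × ℝ × ℝ × ℝ × ℝ =>
      (p.2.1, p.1, p.2.2.1 - p.1 * p.2.1 / 2, (p.2.2.2.2 + p.1 ^ 3 / 3) / 2,
        p.2.2.2.1 - p.2.1 ^ 3 / 6 - p.1 ^ 2 * p.2.1 / 2) := by
    fun_prop
  exact (hpoly.locallyLipschitz.comp hdata).locallyLipschitzOn
    |>.exists_lipschitzOnWith_of_compact isCompact_Icc

theorem coords_ofCurve_zero {f : ℝ → ℝ} (hf0 : f 0 = 0) :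
    (f 0, id (0 : ℝ), (PathMoments.ofCurve f 0).zCoord, (PathMoments.ofCurve f 0).vCoord,
      (PathMoments.ofCurve f 0).wCoord) = (0, 0, 0, 0, 0) := by
  simp [hf0, PathMoments.ofCurve_zero, PathMoments.origin, PathMoments.zCoord,
    PathMoments.vCoord, PathMoments.wCoord]

theorem IsTraj.exists_lipschitzWith_one_curve {T : ℝ} (hT : 0 ≤ T) {x y z v w u1 : ℝ → ℝ}
    (h : IsTraj T x y z v w u1 (fun _ => 1))
    (hu1 : ∀ᵐ t ∂volume.restrict (Icc 0 T), |u1 t| ≤ 1)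
    (h0 : (x 0, y 0, z 0, v 0, w 0) = (0, 0, 0, 0, 0)) :
    ∃ ξ : ℝ → ℝ, LipschitzWith 1 ξ ∧ ξ 0 = 0 ∧
      (x T, y T, z T, v T, w T) = (ξ T, T, (PathMoments.ofCurve ξ T).zCoord,
        (PathMoments.ofCurve ξ T).vCoord, (PathMoments.ofCurve ξ T).wCoord) := by
  obtain ⟨K, hKx, -⟩ := h.exists_lipschitzOnWith
  have hx : ∀ᵐ t ∂volume.restrict (Icc 0 T), HasDerivAt x (u1 t) t := h.2.mono fun t ht => ht.1
  obtain ⟨ξ, hξ, hξx⟩ :=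
    (lipschitzOnWith_of_ae_hasDerivAt (C := 1) hKx hx hu1).extend_real
  have hξ0 : ξ 0 = 0 := by
    rw [← hξx (left_mem_Icc.2 hT)]
    exact congrArg Prod.fst h0
  have hξd : ∀ᵐ t ∂volume.restrict (Icc 0 T), HasDerivAt ξ (u1 t) t := by
    rw [← restrict_Ioo_eq_restrict_Icc] at hx ⊢
    filter_upwards [hx, ae_restrict_mem measurableSet_Ioo] with t ht hmem
    exact ht.congr_of_eventuallyEq <| (hξx.symm.mono Ioo_subset_Icc_self).eventuallyEq_of_mem
      (Ioo_mem_nhds hmem.1 hmem.2)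
  exact ⟨ξ, hξ, hξ0, h.eqOn hT (isTraj_ofCurve hξ hξd) (h0.trans (coords_ofCurve_zero hξ0).symm)
    (right_mem_Icc.2 hT)⟩

theorem singular_reachable_by_piecewise_constant_general
    (T : ℝ) (hT : 0 ≤ T) (x y z v w u1 : ℝ → ℝ)
    (hu1b : ∀ᵐ t ∂(volume.restrict (Icc 0 T)), |u1 t| ≤ 1)
    (htraj : IsTraj T x y z v w u1 (fun _ => 1))
    (hstart : (x 0, y 0, z 0, v 0, w 0) = (0, 0, 0, 0, 0)) :
    ∃ ub : ℝ → ℝ, (∀ t, ub t ∈ Icc (-1 : ℝ) 1) ∧ IsPiecewiseConst 4 0 T ub ∧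
      ∃ x' y' z' v' w' : ℝ → ℝ,
        IsTraj T x' y' z' v' w' ub (fun _ => 1) ∧
        (x' 0, y' 0, z' 0, v' 0, w' 0) = (0, 0, 0, 0, 0) ∧
        (x' T, y' T, z' T, v' T, w' T) = (x T, y T, z T, v T, w T) := by
  obtain ⟨ξ, hξ, hξ0, hend⟩ := htraj.exists_lipschitzWith_one_curve hT hu1b hstart
  obtain ⟨f, hf, hf0, ⟨ub, hub, hpc, hd⟩, heq⟩ := exists_hasPiecewiseConstDeriv_ofCurve_eq hξ hξ0 hT
  have hd' : ∀ᵐ t ∂volume.restrict (Icc 0 T), HasDerivAt f (ub t) t := by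
    rwa [← restrict_Ioo_eq_restrict_Icc, ae_restrict_iff' measurableSet_Ioo]
  refine ⟨ub, hub, hpc, _, _, _, _, _, isTraj_ofCurve hf hd', coords_ofCurve_zero hf0, ?_⟩
  have hpos : f T = ξ T := congrArg PathMoments.pos heq
  rw [hend, heq, hpos, id]

/-- Every point reachable at time `T` from the origin by a trajectory with `u2 ≡ 1`
and measurable `|u1| ≤ 1` is also reachable at time `T` by a trajectory whose control
`ū1` is piecewise constant with values in `[−1,1]` and at most 4 discontinuities. -/
theorem singular_reachable_by_piecewise_constant
    (T : ℝ) (hT : 0 ≤ T) (x y z v w u1 : ℝ → ℝ)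
    (hu1 : Measurable u1)
    (hu1b : ∀ᵐ t ∂(volume.restrict (Icc 0 T)), |u1 t| ≤ 1)
    (htraj : IsTraj T x y z v w u1 (fun _ => 1))
    (hstart : (x 0, y 0, z 0, v 0, w 0) = (0, 0, 0, 0, 0)) :
    ∃ ub : ℝ → ℝ, (∀ t, ub t ∈ Icc (-1:ℝ) 1) ∧ PiecewiseConst4 T ub ∧
      ∃ x' y' z' v' w' : ℝ → ℝ,
        IsTraj T x' y' z' v' w' ub (fun _ => 1) ∧
        (x' 0, y' 0, z' 0, v' 0, w' 0) = (0, 0, 0, 0, 0) ∧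
        (x' T, y' T, z' T, v' T, w' T) = (x T, y T, z T, v T, w T) := by
  obtain ⟨ub, hub, hpc, hreach⟩ :=
    singular_reachable_by_piecewise_constant_general T hT x y z v w u1 hu1b htraj hstart
  exact ⟨ub, hub, hpc.snoc (c := 0) le_rfl (by simp), hreach⟩
end

section
/- Let h4, h5 ∈ ℝ and let θ, h3 : (α,β) → ℝ be differentiable functions such that θ(t) is never an integer multiple of π/2, satisfying θ'(t) = h3(t)/|sin 2θ(t)| and h3'(t) = sgn(cos θ(t))·h4 + sgn(sin θ(t))·h5. Define h1(t) = sgn(cos θ(t))·cos²θ(t) and h2(t) = sgn(sin θ(t))·sin²θ(t). Then |h1(t)| + |h2(t)| = 1 for all t, sgn(h1) = sgn(cos θ), sgn(h2) = sgn(sin θ), and (h1,h2,h3) satisfies the bang-bang vertical subsystem: h1' = −sgn(h2)·h3, h2' = sgn(h1)·h3, h3' = sgn(h1)·h4 + sgn(h2)·h5. -/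
open Real Set

/-!
The signed square `sgn(x) x² = x |x|` is differentiable everywhere, with derivative `2 |x|`. Hence
`cos θ |cos θ|` and `sin θ |sin θ|` have `θ`-derivatives `-sgn(sin θ) |sin 2θ|` and
`sgn(cos θ) |sin 2θ|`, and the speed `θ' = h3 / |sin 2θ|` cancels the common factor.
-/

theorem real_sign_eq_coe_sign (x : ℝ) : Real.sign x = (SignType.sign x : ℝ) := by
  rcases lt_trichotomy x 0 with hx | rfl | hx
  · simp [Real.sign_of_neg hx, sign_neg hx]
  · simp
  · simp [Real.sign_of_pos hx, sign_pos hx]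

theorem real_sign_mul_abs (x : ℝ) : Real.sign x * |x| = x := by
  rw [real_sign_eq_coe_sign, sign_mul_abs]

theorem real_sign_mul_sq (x : ℝ) : Real.sign x * x ^ 2 = x * |x| := by
  rw [real_sign_eq_coe_sign, sq, ← mul_assoc, sign_mul_self, mul_comm]

theorem real_sign_self_mul_abs (x : ℝ) : Real.sign (x * |x|) = Real.sign x := by
  rcases eq_or_ne x 0 with rfl | hx
  · simp
  · simp only [real_sign_eq_coe_sign, sign_mul, sign_pos (abs_pos.2 hx), mul_one]

theorem abs_self_mul_abs {R : Type*} [Ring R] [LinearOrder R] [IsOrderedRing R] (x : R) :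
    |x * (|x|)| = x ^ 2 := by
  rw [abs_mul, abs_abs, abs_mul_abs_self, sq]

theorem hasDerivAt_self_mul_abs (x : ℝ) : HasDerivAt (fun y ↦ y * |y|) (2 * |x|) x := by
  have deriv_of_ne_zero : ∀ y : ℝ, y ≠ 0 → HasDerivAt (fun y ↦ y * |y|) (2 * |y|) y :=
    fun y hy ↦ ((hasDerivAt_id y).mul (hasDerivAt_abs hy)).congr_deriv <| by
      rw [id_eq, self_mul_sign, one_mul, two_mul]
  exact hasDerivAt_of_hasDerivAt_of_ne' deriv_of_ne_zero (by fun_prop) (by fun_prop) x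

theorem abs_sin_two_mul (x : ℝ) : |sin (2 * x)| = 2 * |sin x| * |cos x| := by
  rw [sin_two_mul, abs_mul, abs_mul, abs_two]

theorem hasDerivAt_cos_mul_abs_cos (x : ℝ) :
    HasDerivAt (fun y ↦ cos y * |cos y|) (-Real.sign (sin x) * |sin (2 * x)|) x :=
  ((hasDerivAt_self_mul_abs (cos x)).comp x (hasDerivAt_cos x)).congr_deriv <| by
    rw [abs_sin_two_mul]
    linear_combination 2 * |cos x| * real_sign_mul_abs (sin x)

theorem hasDerivAt_sin_mul_abs_sin (x : ℝ) :
    HasDerivAt (fun y ↦ sin y * |sin y|) (Real.sign (cos x) * |sin (2 * x)|) x :=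
  ((hasDerivAt_self_mul_abs (sin x)).comp x (hasDerivAt_sin x)).congr_deriv <| by
    rw [abs_sin_two_mul]
    linear_combination -2 * |sin x| * real_sign_mul_abs (cos x)

theorem sin_two_mul_eq_zero_iff {x : ℝ} : sin (2 * x) = 0 ↔ ∃ n : ℤ, x = n * (π / 2) := by
  rw [Real.sin_eq_zero_iff]
  exact exists_congr fun n ↦ by constructor <;> intro h <;> linarith

/-- The angular parameterization of the square `|h1| + |h2| = 1` transforms the
pendulum-like system `θ' = h3/|sin 2θ|`, `h3' = sgn(cos θ)·h4 + sgn(sin θ)·h5`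
into the bang-bang vertical subsystem. -/
theorem angular_coordinate_gives_bang_bang_system
    (α β h4 h5 : ℝ) (θ h3 : ℝ → ℝ)
    (hθne : ∀ t ∈ Ioo α β, ∀ n : ℤ, θ t ≠ n * (π / 2))
    (hθ' : ∀ t ∈ Ioo α β, HasDerivAt θ (h3 t / |Real.sin (2 * θ t)|) t)
    (hh3' : ∀ t ∈ Ioo α β,
      HasDerivAt h3 (Real.sign (Real.cos (θ t)) * h4 + Real.sign (Real.sin (θ t)) * h5) t) :
    ∀ t ∈ Ioo α β,
      |Real.sign (Real.cos (θ t)) * Real.cos (θ t) ^ 2|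
        + |Real.sign (Real.sin (θ t)) * Real.sin (θ t) ^ 2| = 1 ∧
      Real.sign (Real.sign (Real.cos (θ t)) * Real.cos (θ t) ^ 2)
        = Real.sign (Real.cos (θ t)) ∧
      Real.sign (Real.sign (Real.sin (θ t)) * Real.sin (θ t) ^ 2)
        = Real.sign (Real.sin (θ t)) ∧
      HasDerivAt (fun s => Real.sign (Real.cos (θ s)) * Real.cos (θ s) ^ 2)
        (-(Real.sign (Real.sign (Real.sin (θ t)) * Real.sin (θ t) ^ 2)) * h3 t) t ∧
      HasDerivAt (fun s => Real.sign (Real.sin (θ s)) * Real.sin (θ s) ^ 2)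
        (Real.sign (Real.sign (Real.cos (θ t)) * Real.cos (θ t) ^ 2) * h3 t) t ∧
      HasDerivAt h3
        (Real.sign (Real.sign (Real.cos (θ t)) * Real.cos (θ t) ^ 2) * h4
          + Real.sign (Real.sign (Real.sin (θ t)) * Real.sin (θ t) ^ 2) * h5) t := by
  intro t ht
  have sin_two_mul_ne_zero : sin (2 * θ t) ≠ 0 := fun h ↦
    have ⟨n, hn⟩ := sin_two_mul_eq_zero_iff.1 h
    hθne t ht n hn
  have speed_cancel : |sin (2 * θ t)| * (h3 t / |sin (2 * θ t)|) = h3 t :=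
    mul_div_cancel₀ _ (abs_ne_zero.2 sin_two_mul_ne_zero)
  simp only [real_sign_mul_sq, real_sign_self_mul_abs, abs_self_mul_abs, true_and]
  refine ⟨cos_sq_add_sin_sq _, ?_, ?_, hh3' t ht⟩
  · exact ((hasDerivAt_cos_mul_abs_cos (θ t)).comp t (hθ' t ht)).congr_deriv <| by
      rw [mul_assoc, speed_cancel]
  · exact ((hasDerivAt_sin_mul_abs_sin (θ t)).comp t (hθ' t ht)).congr_deriv <| by
      rw [mul_assoc, speed_cancel]
end

section
/- Define linear maps ε¹,…,ε⁷ : ℝ⁵ → ℝ⁵ by ε¹(h1,h2,h3,h4,h5) = (h2,h1,−h3,−h5,−h4), ε²(h) = (−h2,−h1,−h3,h5,h4), ε³(h) = (h1,−h2,−h3,−h4,h5), ε⁴(h) = (−h1,h2,−h3,h4,−h5), ε⁵(h) = (−h2,h1,h3,−h5,h4), ε⁶(h) = (h2,−h1,h3,h5,−h4), ε⁷(h) = (−h1,−h2,h3,−h4,−h5). If h = (h1,…,h5) : (α,β) → ℝ⁵ is a Lipschitz curve with h1(t)·h2(t) ≠ 0 for all t, satisfying a.e. the bang-bang vertical subsystem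 h1' = −sgn(h2)·h3, h2' = sgn(h1)·h3, h3' = sgn(h1)·h4 + sgn(h2)·h5, h4' = h5' = 0, then for each i ∈ {1,…,7} the curve ε^i ∘ h satisfies the same system. -/
/-! The right-hand side of the system is a vector field on `ℝ⁵`, and a linear map commuting with a
vector field carries integral curves to integral curves. The coordinate swap `ε¹` commutes with this
field, and so does `ε³` because `sgn` is odd. They generate a dihedral group of order eight, whose
nontrivial elements are exactly `ε¹, …, ε⁷`: the rotations are `ε⁵ = ε¹ε³`, `ε⁶ = ε³ε¹` and
`ε⁷ = ε⁵ε⁵`, and the remaining reflections are `ε² = ε⁷ε¹` and `ε⁴ = ε⁷ε³`. -/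

open MeasureTheory Set

/-- The discrete symmetries `ε¹, …, ε⁷` of the bang-bang vertical subsystem. -/
def eps1 : ℝ × ℝ × ℝ × ℝ × ℝ → ℝ × ℝ × ℝ × ℝ × ℝ
  | (h1, h2, h3, h4, h5) => (h2, h1, -h3, -h5, -h4)

def eps2 : ℝ × ℝ × ℝ × ℝ × ℝ → ℝ × ℝ × ℝ × ℝ × ℝ
  | (h1, h2, h3, h4, h5) => (-h2, -h1, -h3, h5, h4)

def eps3 : ℝ × ℝ × ℝ × ℝ × ℝ → ℝ × ℝ × ℝ × ℝ × ℝ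
  | (h1, h2, h3, h4, h5) => (h1, -h2, -h3, -h4, h5)

def eps4 : ℝ × ℝ × ℝ × ℝ × ℝ → ℝ × ℝ × ℝ × ℝ × ℝ
  | (h1, h2, h3, h4, h5) => (-h1, h2, -h3, h4, -h5)

def eps5 : ℝ × ℝ × ℝ × ℝ × ℝ → ℝ × ℝ × ℝ × ℝ × ℝ
  | (h1, h2, h3, h4, h5) => (-h2, h1, h3, -h5, h4)

def eps6 : ℝ × ℝ × ℝ × ℝ × ℝ → ℝ × ℝ × ℝ × ℝ × ℝ
  | (h1, h2, h3, h4, h5) => (h2, -h1, h3, h5, -h4)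

def eps7 : ℝ × ℝ × ℝ × ℝ × ℝ → ℝ × ℝ × ℝ × ℝ × ℝ
  | (h1, h2, h3, h4, h5) => (-h1, -h2, h3, -h4, -h5)

/-- The bang-bang vertical subsystem of the ℓ∞ sub-Finsler problem on the Cartan group,
for a curve `h = (h1,h2,h3,h4,h5)` in `ℝ⁵`:
`h1' = −sgn(h2)·h3`, `h2' = sgn(h1)·h3`, `h3' = sgn(h1)·h4 + sgn(h2)·h5`, `h4' = h5' = 0`. -/
def BangOde (h : ℝ → ℝ × ℝ × ℝ × ℝ × ℝ) (t : ℝ) : Prop :=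
  HasDerivAt (fun s => (h s).1) (-(Real.sign (h t).2.1) * (h t).2.2.1) t ∧
  HasDerivAt (fun s => (h s).2.1) (Real.sign (h t).1 * (h t).2.2.1) t ∧
  HasDerivAt (fun s => (h s).2.2.1)
    (Real.sign (h t).1 * (h t).2.2.2.1 + Real.sign (h t).2.1 * (h t).2.2.2.2) t ∧
  HasDerivAt (fun s => (h s).2.2.2.1) 0 t ∧
  HasDerivAt (fun s => (h s).2.2.2.2) 0 t

/-- A Lipschitz solution of the bang-bang vertical subsystem on `(α,β)`. -/
def IsBangSol (α β : ℝ) (h : ℝ → ℝ × ℝ × ℝ × ℝ × ℝ) : Prop :=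
  (∃ K, LipschitzOnWith K h (Ioo α β)) ∧
  (∀ᵐ t ∂(volume.restrict (Ioo α β)), BangOde h t)

/-- The right-hand side of the bang-bang vertical subsystem as a vector field on `ℝ⁵`, which turns
the system into the autonomous equation `h' = bangField h`. -/
noncomputable def bangField : ℝ × ℝ × ℝ × ℝ × ℝ → ℝ × ℝ × ℝ × ℝ × ℝ
  | (h1, h2, h3, h4, h5) =>
    (-(Real.sign h2) * h3, Real.sign h1 * h3, Real.sign h1 * h4 + Real.sign h2 * h5, 0, 0)

/-- A symmetry of the bang-bang vertical subsystem in the infinitesimal sense: a linear map of `ℝ⁵`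
commuting with the vector field of the system. Linearity is a predicate on plain functions because
the maps `ε¹, …, ε⁷` are given as such. -/
structure IsBangSymmetry (e : ℝ × ℝ × ℝ × ℝ × ℝ → ℝ × ℝ × ℝ × ℝ × ℝ) : Prop where
  isLinearMap : IsLinearMap ℝ e
  commute_bangField : Function.Commute e bangField

theorem hasDerivAt_prodMk_iff {𝕜 E F : Type*} [NontriviallyNormedField 𝕜]
    [NormedAddCommGroup E] [NormedSpace 𝕜 E] [NormedAddCommGroup F] [NormedSpace 𝕜 F]
    {f : 𝕜 → E × F} {f' : E × F} {t : 𝕜} :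
    HasDerivAt f f' t ↔
      HasDerivAt (fun s => (f s).1) f'.1 t ∧ HasDerivAt (fun s => (f s).2) f'.2 t :=
  ⟨fun hf => ⟨hf.fst, hf.snd⟩, fun ⟨hf₁, hf₂⟩ => hf₁.prodMk hf₂⟩

theorem hasDerivAt_comp_of_semiconj {𝕜 E F : Type*} [NontriviallyNormedField 𝕜]
    [NormedAddCommGroup E] [NormedSpace 𝕜 E] [NormedAddCommGroup F] [NormedSpace 𝕜 F]
    {V : E → E} {W : F → F} {A : E →L[𝕜] F} (hA : Function.Semiconj A V W)
    {h : 𝕜 → E} {t : 𝕜} (hh : HasDerivAt h (V (h t)) t) :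
    HasDerivAt (A ∘ h) (W ((A ∘ h) t)) t := by
  simpa only [Function.comp_apply, hA.eq] using A.hasFDerivAt.comp_hasDerivAt t hh

theorem bangOde_iff_hasDerivAt {h : ℝ → ℝ × ℝ × ℝ × ℝ × ℝ} {t : ℝ} :
    BangOde h t ↔ HasDerivAt h (bangField (h t)) t := by
  simp only [hasDerivAt_prodMk_iff, BangOde, bangField]

namespace IsBangSymmetry

variable {e e' : ℝ × ℝ × ℝ × ℝ × ℝ → ℝ × ℝ × ℝ × ℝ × ℝ}

theorem comp (he : IsBangSymmetry e) (he' : IsBangSymmetry e') : IsBangSymmetry (e ∘ e') where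
  isLinearMap := (he.isLinearMap.mk' e ∘ₗ he'.isLinearMap.mk' e').isLinear
  commute_bangField := he.commute_bangField.comp_left he'.commute_bangField

theorem isBangSol_comp (he : IsBangSymmetry e) {α β : ℝ} {h : ℝ → ℝ × ℝ × ℝ × ℝ × ℝ}
    (hsol : IsBangSol α β h) : IsBangSol α β (e ∘ h) := by
  obtain ⟨⟨K, hK⟩, hode⟩ := hsol
  let A := (he.isLinearMap.mk' e).toContinuousLinearMap
  have hA : Function.Commute A bangField := he.commute_bangField
  refine ⟨⟨_, A.lipschitz.comp_lipschitzOnWith hK⟩, hode.mono fun t ht => ?_⟩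
  rw [bangOde_iff_hasDerivAt] at ht ⊢
  exact hasDerivAt_comp_of_semiconj hA ht

end IsBangSymmetry

theorem isBangSymmetry_eps1 : IsBangSymmetry eps1 where
  isLinearMap := by constructor <;> intros <;> ext <;> simp [eps1, add_comm]
  commute_bangField x := by simp [eps1, bangField, add_comm]

theorem isBangSymmetry_eps3 : IsBangSymmetry eps3 where
  isLinearMap := by constructor <;> intros <;> ext <;> simp [eps3, add_comm]
  commute_bangField x := by simp [eps3, bangField, Real.sign_neg, add_comm]

theorem eps1_comp_eps3 : eps1 ∘ eps3 = eps5 := by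
  simp [funext_iff, eps1, eps3, eps5]

theorem eps3_comp_eps1 : eps3 ∘ eps1 = eps6 := by
  simp [funext_iff, eps1, eps3, eps6]

theorem eps5_comp_eps5 : eps5 ∘ eps5 = eps7 := rfl

theorem eps7_comp_eps1 : eps7 ∘ eps1 = eps2 := by
  simp [funext_iff, eps1, eps2, eps7]

theorem eps7_comp_eps3 : eps7 ∘ eps3 = eps4 := by
  simp [funext_iff, eps3, eps4, eps7]

theorem isBangSymmetry_eps5 : IsBangSymmetry eps5 :=
  eps1_comp_eps3 ▸ isBangSymmetry_eps1.comp isBangSymmetry_eps3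

theorem isBangSymmetry_eps6 : IsBangSymmetry eps6 :=
  eps3_comp_eps1 ▸ isBangSymmetry_eps3.comp isBangSymmetry_eps1

theorem isBangSymmetry_eps7 : IsBangSymmetry eps7 :=
  eps5_comp_eps5 ▸ isBangSymmetry_eps5.comp isBangSymmetry_eps5

theorem isBangSymmetry_eps2 : IsBangSymmetry eps2 :=
  eps7_comp_eps1 ▸ isBangSymmetry_eps7.comp isBangSymmetry_eps1

theorem isBangSymmetry_eps4 : IsBangSymmetry eps4 :=
  eps7_comp_eps3 ▸ isBangSymmetry_eps7.comp isBangSymmetry_eps3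

theorem eps_symmetries_of_bang_bang_system_general
    (α β : ℝ) (h : ℝ → ℝ × ℝ × ℝ × ℝ × ℝ) (hsol : IsBangSol α β h) :
    IsBangSol α β (eps1 ∘ h) ∧ IsBangSol α β (eps2 ∘ h) ∧ IsBangSol α β (eps3 ∘ h) ∧
    IsBangSol α β (eps4 ∘ h) ∧ IsBangSol α β (eps5 ∘ h) ∧ IsBangSol α β (eps6 ∘ h) ∧
    IsBangSol α β (eps7 ∘ h) :=
  ⟨isBangSymmetry_eps1.isBangSol_comp hsol, isBangSymmetry_eps2.isBangSol_comp hsol,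
    isBangSymmetry_eps3.isBangSol_comp hsol, isBangSymmetry_eps4.isBangSol_comp hsol,
    isBangSymmetry_eps5.isBangSol_comp hsol, isBangSymmetry_eps6.isBangSol_comp hsol,
    isBangSymmetry_eps7.isBangSol_comp hsol⟩

/-- The maps `ε¹, …, ε⁷` are symmetries of the bang-bang vertical subsystem:
they transform its solutions (with `h1·h2 ≠ 0`) into solutions. -/
theorem eps_symmetries_of_bang_bang_system
    (α β : ℝ) (h : ℝ → ℝ × ℝ × ℝ × ℝ × ℝ)
    (hsol : IsBangSol α β h)
    (hne : ∀ t ∈ Ioo α β, (h t).1 * (h t).2.1 ≠ 0) :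
    IsBangSol α β (eps1 ∘ h) ∧ IsBangSol α β (eps2 ∘ h) ∧ IsBangSol α β (eps3 ∘ h) ∧
    IsBangSol α β (eps4 ∘ h) ∧ IsBangSol α β (eps5 ∘ h) ∧ IsBangSol α β (eps6 ∘ h) ∧
    IsBangSol α β (eps7 ∘ h) :=
  eps_symmetries_of_bang_bang_system_general α β h hsol
end

section
/- Let h4, h5 ∈ ℝ and let θ, h3 : (α,β) → ℝ be differentiable functions such that θ(t) is never an integer multiple of π/2, satisfying θ'(t) = h3(t)/|sin 2θ(t)| and h3'(t) = sgn(cos θ(t))·h4 + sgn(sin θ(t))·h5. Then the full energy E(t) = h3(t)²/2 + U(θ(t)) is constant on (α,β), where U(θ) = h5·sgn(cos θ)·cos²θ − h4·sgn(sin θ)·sin²θ is the potential energy. -/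
open Real Set

/-- The potential energy `U(θ) = h5·sgn(cos θ)·cos²θ − h4·sgn(sin θ)·sin²θ` of the
pendulum-like reduction of the bang-bang vertical subsystem. -/
noncomputable def potentialU (h4 h5 θ : ℝ) : ℝ :=
  h5 * Real.sign (Real.cos θ) * Real.cos θ ^ 2 - h4 * Real.sign (Real.sin θ) * Real.sin θ ^ 2

/-!
The potential is assembled from `x ↦ sgn x · x² = |x| x`, which is differentiable on the whole line,
the zeros of `x` included, with derivative `2|x|`. Hence `U` is differentiable everywhere and
`U'(θ) = -|sin 2θ| (sgn(cos θ) h4 + sgn(sin θ) h5)`. Along a solution the time scale `|sin 2θ|`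
cancels: `h3 h3' = |sin 2θ| θ' h3' = -U'(θ) θ'`, so `h3²/2 + U(θ)` has derivative zero.
-/

theorem realSign_eq_coe_sign (x : ℝ) : Real.sign x = SignType.sign x := by
  rcases lt_trichotomy x 0 with hx | rfl | hx <;> simp [*, Real.sign_of_neg, Real.sign_of_pos]

theorem hasDerivAt_abs_mul_self (x : ℝ) : HasDerivAt (fun y : ℝ => |y| * y) (2 * |x|) x := by
  -- Continuity of the candidate derivative reduces differentiability at `0` to the other points.
  refine hasDerivAt_of_hasDerivAt_of_ne' (x := 0) (g := fun y => 2 * |y|) (fun y hy => ?_)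
    (by fun_prop) (by fun_prop) x
  refine ((hasDerivAt_abs hy).mul (hasDerivAt_id y)).congr_deriv ?_
  rw [id, sign_mul_self, mul_one, two_mul]

theorem hasDerivAt_realSign_mul_sq (x : ℝ) :
    HasDerivAt (fun y : ℝ => Real.sign y * y ^ 2) (2 * |x|) x := by
  simpa only [realSign_eq_coe_sign, sq, ← mul_assoc, sign_mul_self] using hasDerivAt_abs_mul_self x

theorem hasDerivAt_potentialU (h4 h5 θ : ℝ) :
    HasDerivAt (potentialU h4 h5)
      (-(|Real.sin (2 * θ)| *
        (Real.sign (Real.cos θ) * h4 + Real.sign (Real.sin θ) * h5))) θ := by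
  have hcos := (hasDerivAt_realSign_mul_sq (Real.cos θ)).comp θ (Real.hasDerivAt_cos θ)
  have hsin := (hasDerivAt_realSign_mul_sq (Real.sin θ)).comp θ (Real.hasDerivAt_sin θ)
  have hU : HasDerivAt (potentialU h4 h5)
      (h5 * (2 * |Real.cos θ| * -Real.sin θ) - h4 * (2 * |Real.sin θ| * Real.cos θ)) θ := by
    refine ((hcos.const_mul h5).sub (hsin.const_mul h4)).congr_of_eventuallyEq (.of_eq ?_)
    funext φ
    simp only [potentialU, Function.comp_apply, Pi.sub_apply, mul_assoc]
  refine hU.congr_deriv ?_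
  rw [Real.sin_two_mul, abs_mul, abs_mul, abs_two, realSign_eq_coe_sign, realSign_eq_coe_sign]
  linear_combination 2 * h5 * |Real.cos θ| * sign_mul_abs (Real.sin θ) +
    2 * h4 * |Real.sin θ| * sign_mul_abs (Real.cos θ)

theorem hasDerivWithinAt_energy {I : Set ℝ} {U q p : ℝ → ℝ} {t v w F : ℝ}
    (hU : HasDerivAt U (-(w * F)) (q t)) (hq : HasDerivWithinAt q v I t)
    (hp : HasDerivWithinAt p F I t) (hwv : w * v = p t) :
    HasDerivWithinAt (fun s => p s ^ 2 / 2 + U (q s)) 0 I t := by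
  refine (((hp.pow 2).div_const 2).add (hU.comp_hasDerivWithinAt t hq)).congr_deriv ?_
  rw [← hwv]
  ring

theorem eq_of_hasDerivWithinAt_zero {𝕜 G : Type*} [RCLike 𝕜] [NormedAddCommGroup G]
    [NormedSpace 𝕜 G] {s : Set 𝕜} (hs : Convex ℝ s) {f : 𝕜 → G}
    (hf : ∀ x ∈ s, HasDerivWithinAt f 0 s x) {x y : 𝕜} (hx : x ∈ s) (hy : y ∈ s) :
    f x = f y := by
  have hle : ‖f x - f y‖ ≤ 0 * ‖x - y‖ :=
    hs.norm_image_sub_le_of_norm_hasDerivWithin_le hf (fun _ _ => norm_zero.le) hy hx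
  rwa [zero_mul, norm_le_zero_iff, sub_eq_zero] at hle

theorem sin_two_mul_ne_zero {θ : ℝ} (hθ : ∀ n : ℤ, θ ≠ n * (π / 2)) : Real.sin (2 * θ) ≠ 0 := by
  intro h
  obtain ⟨n, hn⟩ := Real.sin_eq_zero_iff.1 h
  exact hθ n (by linarith)

/-- Writing the first equation as `|sin 2θ| θ' = h3` lets solutions pass through the multiples of
`π / 2`, without division by zero. -/
theorem energy_conservation_bang_bang_general
    {I : Set ℝ} (hI : Convex ℝ I) {h4 h5 : ℝ} {θ θ' h3 : ℝ → ℝ}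
    (hθ : ∀ t ∈ I, HasDerivWithinAt θ (θ' t) I t)
    (hθ' : ∀ t ∈ I, |Real.sin (2 * θ t)| * θ' t = h3 t)
    (hh3' : ∀ t ∈ I, HasDerivWithinAt h3
      (Real.sign (Real.cos (θ t)) * h4 + Real.sign (Real.sin (θ t)) * h5) I t) :
    ∀ s ∈ I, ∀ t ∈ I,
      h3 s ^ 2 / 2 + potentialU h4 h5 (θ s) = h3 t ^ 2 / 2 + potentialU h4 h5 (θ t) := by
  have hE : ∀ t ∈ I, HasDerivWithinAt (fun t => h3 t ^ 2 / 2 + potentialU h4 h5 (θ t)) 0 I t :=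
    fun t ht => hasDerivWithinAt_energy (hasDerivAt_potentialU h4 h5 (θ t)) (hθ t ht) (hh3' t ht)
      (hθ' t ht)
  exact fun _ hs _ ht => eq_of_hasDerivWithinAt_zero hI hE hs ht

/-- Conservation of the full energy `E = h3²/2 + U(θ)` along solutions of the system
`θ' = h3/|sin 2θ|`, `h3' = sgn(cos θ)·h4 + sgn(sin θ)·h5`. -/
theorem energy_conservation_bang_bang
    (α β h4 h5 : ℝ) (θ h3 : ℝ → ℝ)
    (hθne : ∀ t ∈ Ioo α β, ∀ n : ℤ, θ t ≠ n * (π / 2))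
    (hθ' : ∀ t ∈ Ioo α β, HasDerivAt θ (h3 t / |Real.sin (2 * θ t)|) t)
    (hh3' : ∀ t ∈ Ioo α β,
      HasDerivAt h3 (Real.sign (Real.cos (θ t)) * h4 + Real.sign (Real.sin (θ t)) * h5) t) :
    ∀ s ∈ Ioo α β, ∀ t ∈ Ioo α β,
      h3 s ^ 2 / 2 + potentialU h4 h5 (θ s) = h3 t ^ 2 / 2 + potentialU h4 h5 (θ t) := by
  exact energy_conservation_bang_bang_general (convex_Ioo α β)
    (fun t ht => (hθ' t ht).hasDerivWithinAt)
    (fun t ht => mul_div_cancel₀ _ (abs_ne_zero.2 (sin_two_mul_ne_zero (hθne t ht))))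
    (fun t ht => (hh3' t ht).hasDerivWithinAt)
end
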